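/- arXiv:1812.09753 — 5 statements merged into one kernel-verified Lean document; each statement's English description precedes it below -/
import Mathlib

section
/- Let n ≥ 2 and D > 0. If X ⊆ 𝔹^n is a Borel measurable set with hyperbolic diameter diam_H X ≤ D and μ_H(X) = μ_H({x ∈ ℝ^n : ‖x‖ ≤ tanh(D/2)}), then there exists z ∈ 𝔹^n such that the closure of X in ℝ^n equals the hyperbolic closed ball {y ∈ 𝔹^n : d_H(y,z) ≤ D/2}. -/
/-!
Let `C = cosh D`. Call a compact subset of the Klein model admissible if `cosh d_H ≤ C` on it, and
extremal if it is admissible of largest, positive volume. The theorem follows once every extremal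
set is known to be a hyperbolic ball of radius `D / 2` (`Ext.eq_hb`): extremal sets exist by Blaschke
selection (`exists_ext`), so balls of radius `D / 2` are extremal (`ext_hb_zero`), hence so is the
closure of `X`.

Geodesics of the Klein model are Euclidean segments, and hyperbolic balls are convex, so taking
convex hulls preserves the diameter; an extremal set `K` is therefore convex, and complete: every
point within distance `D` of all points of `K` lies in `K` (`Ext.complete`). In particular every
boundary point `x` has an opposite point in `K`, at distance `D` from `x` (`Ext.exists_opp`).

The symmetry comes from two-point symmetrization (polarization) with respect to hyperbolic
reflections. Reflections are induced by Lorentz reflections of the hyperboloid and preserve the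
volume, since the volume of `A` is proportional to the Lebesgue measure of the part of the cone over
`A` below the hyperboloid (`hypVol_image_rho`). Polarization preserves the volume and does not
increase the diameter, so it maps extremal sets to extremal sets (`Ext.pol`). Applying the existence
of opposite points to polarizations of `K` shows that for two boundary points `x`, `p` the
reflection exchanging them maps some opposite point of `x` to an opposite point of `p`
(`Ext.exists_opp_rho`).

If `0` is interior to `K`, the boundary point `p` of least norm has a unique opposite point `q`
(`Ext.exists_unique_opp`). Hence, for every other boundary point `r`, the reflection exchanging `p`
and `r` maps `q` to an opposite point of `r`. This choice of opposite points is continuous, which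
forces opposite points to be unique (`Ext.opp_unique`). Then `q` also has the unique opposite point
`p`, and the two reflections exchanging `r` with `p` and with `q` yield the same opposite point of
`r`; this is only possible if all diameters have the same midpoint (`lift_add_eq`). So the boundary
of `K` lies on a sphere of radius `D / 2` (`Ext.exists_center`), and `K` is the ball.
-/

open MeasureTheory

noncomputable section

/-- Euclidean space `ℝ^n`. -/
abbrev Fsp (n : ℕ) : Type := EuclideanSpace ℝ (Fin n)

/-- The inverse hyperbolic cosine `arcosh x = log (x + √(x² − 1))`. -/
def arcosh (x : ℝ) : ℝ := Real.log (x + Real.sqrt (x ^ 2 - 1))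

/-- Hyperbolic distance in the Klein model on the open unit ball of `ℝ^n`:
`d_H(x,y) = arcosh ((1 − ⟨x,y⟩)/√((1 − ‖x‖²)(1 − ‖y‖²)))`. -/
def hypDist {n : ℕ} (x y : Fsp n) : ℝ :=
  arcosh ((1 - inner (𝕜 := ℝ) x y) / Real.sqrt ((1 - ‖x‖ ^ 2) * (1 - ‖y‖ ^ 2)))

/-- Hyperbolic volume in the Klein model: density `(1 − ‖x‖²)^{−(n+1)/2}`
with respect to Lebesgue measure. -/
def hypVol (n : ℕ) : Measure (Fsp n) :=
  (volume : Measure (Fsp n)).withDensity fun x =>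
    ENNReal.ofReal ((1 - ‖x‖ ^ 2) ^ (-(((n : ℝ) + 1) / 2)))

namespace HypIso

open scoped Pointwise

variable {n : ℕ}

/-! ### The Klein model and the hyperboloid -/

/-- The conformal factor `√(1 - ‖x‖²)` of the Klein model; it vanishes outside the unit ball. -/
def lam (x : Fsp n) : ℝ := √(1 - ‖x‖ ^ 2)

/-- The hyperbolic cosine of the hyperbolic distance of two points of the open unit ball. -/
def cd (x y : Fsp n) : ℝ := (1 - inner ℝ x y) / (lam x * lam y)

/-- The defect `C λ(x) λ(y) - (1 - ⟨x, y⟩)`. On the open unit ball it is nonnegative exactly when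
`cosh d_H(x,y) ≤ C`; unlike `cd` it is continuous on the whole space, and for `C ≥ 0` it is
concave in `y` on the unit ball. -/
def F (C : ℝ) (x y : Fsp n) : ℝ := C * lam x * lam y - (1 - inner ℝ x y)

/-- The Lorentz form on `ℝ × ℝ^n`. -/
def Q (u v : ℝ × Fsp n) : ℝ := u.1 * v.1 - inner ℝ u.2 v.2

/-- The lift of a point of the Klein model to the upper sheet of the hyperboloid. -/
def lift (x : Fsp n) : ℝ × Fsp n := ((lam x)⁻¹, (lam x)⁻¹ • x)

/-- The central projection of `ℝ × ℝ^n` to the Klein model. -/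
def proj (v : ℝ × Fsp n) : Fsp n := v.1⁻¹ • v.2

lemma one_sub_sq_pos {x : Fsp n} (hx : ‖x‖ < 1) : 0 < 1 - ‖x‖ ^ 2 := by
  nlinarith [norm_nonneg x]

lemma lam_pos {x : Fsp n} (hx : ‖x‖ < 1) : 0 < lam x := Real.sqrt_pos.2 (one_sub_sq_pos hx)

lemma lam_nonneg (x : Fsp n) : 0 ≤ lam x := Real.sqrt_nonneg _

lemma lam_sq {x : Fsp n} (hx : ‖x‖ ≤ 1) : lam x ^ 2 = 1 - ‖x‖ ^ 2 :=
  Real.sq_sqrt (by nlinarith [norm_nonneg x])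

lemma norm_lt_one_of_lam_pos {x : Fsp n} (hx : 0 < lam x) : ‖x‖ < 1 := by
  have := Real.sqrt_pos.1 hx
  nlinarith [norm_nonneg x]

lemma continuous_lam : Continuous (lam : Fsp n → ℝ) := by unfold lam; fun_prop

lemma continuous_F (C : ℝ) : Continuous fun p : Fsp n × Fsp n => F C p.1 p.2 := by
  have := continuous_lam (n := n)
  unfold F; fun_prop

lemma F_comm (C : ℝ) (x y : Fsp n) : F C x y = F C y x := by
  unfold F; rw [real_inner_comm]; ring

lemma cd_comm (x y : Fsp n) : cd x y = cd y x := by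
  unfold cd; rw [real_inner_comm, mul_comm (lam x)]

lemma F_eq {C : ℝ} {x y : Fsp n} (hx : ‖x‖ < 1) (hy : ‖y‖ < 1) :
    F C x y = lam x * lam y * (C - cd x y) := by
  have := lam_pos hx; have := lam_pos hy
  unfold F cd; field_simp

lemma F_nonneg_iff {C : ℝ} {x y : Fsp n} (hx : ‖x‖ < 1) (hy : ‖y‖ < 1) :
    0 ≤ F C x y ↔ cd x y ≤ C := by
  have h := mul_pos (lam_pos hx) (lam_pos hy)
  rw [F_eq hx hy, mul_nonneg_iff_of_pos_left h, sub_nonneg]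

lemma F_eq_zero_iff {C : ℝ} {x y : Fsp n} (hx : ‖x‖ < 1) (hy : ‖y‖ < 1) :
    F C x y = 0 ↔ cd x y = C := by
  have h := mul_pos (lam_pos hx) (lam_pos hy)
  rw [F_eq hx hy, mul_eq_zero, sub_eq_zero]
  constructor
  · rintro (hxy | hxy)
    · exact absurd hxy h.ne'
    · exact hxy.symm
  · intro hxy; exact Or.inr hxy.symm

/-- A nonnegative defect at a point of the open ball forces the other point into the open ball. -/
lemma norm_lt_of_F_nonneg {C : ℝ} {x y : Fsp n} (hx : ‖x‖ < 1) (hy : ‖y‖ ≤ 1)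
    (h : 0 ≤ F C x y) : ‖y‖ < 1 := by
  apply norm_lt_one_of_lam_pos
  refine (lam_nonneg y).lt_of_ne ?_
  intro h0
  unfold F at h
  rw [← h0] at h
  have := real_inner_le_norm x y
  nlinarith [norm_nonneg x, norm_nonneg y]

/-- The identity behind the reversed Cauchy–Schwarz inequality. -/
lemma rcs_aux (x y : Fsp n) : (1 - inner ℝ x y) ^ 2 - (1 - ‖x‖ ^ 2) * (1 - ‖y‖ ^ 2)
    = (1 - ‖x‖ ^ 2) * ‖x - y‖ ^ 2 + (inner ℝ x (x - y)) ^ 2 := by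
  rw [norm_sub_sq_real, inner_sub_right, real_inner_self_eq_norm_sq]; ring

lemma inner_le_one {x y : Fsp n} (hx : ‖x‖ ≤ 1) (hy : ‖y‖ ≤ 1) : inner ℝ x y ≤ 1 := by
  have := real_inner_le_norm x y
  nlinarith [norm_nonneg x, norm_nonneg y]

lemma rcs {x y : Fsp n} (hx : ‖x‖ ≤ 1) (hy : ‖y‖ ≤ 1) :
    lam x * lam y ≤ 1 - inner ℝ x y := by
  have h1 := inner_le_one hx hy
  apply le_of_sq_le_sq _ (by linarith)
  rw [mul_pow, lam_sq hx, lam_sq hy]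
  have h2 := rcs_aux x y
  have h3 : 0 ≤ 1 - ‖x‖ ^ 2 := by nlinarith [norm_nonneg x]
  nlinarith [mul_nonneg h3 (sq_nonneg ‖x - y‖), sq_nonneg (inner ℝ x (x - y))]

lemma rcs_strict {x y : Fsp n} (hx : ‖x‖ < 1) (hy : ‖y‖ < 1) (hxy : x ≠ y) :
    lam x * lam y < 1 - inner ℝ x y := by
  have h1 := inner_le_one hx.le hy.le
  apply lt_of_pow_lt_pow_left₀ 2 (by linarith)
  rw [mul_pow, lam_sq hx.le, lam_sq hy.le]
  have h2 := rcs_aux x y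
  have h3 := one_sub_sq_pos hx
  have h4 : 0 < ‖x - y‖ := norm_pos_iff.2 (sub_ne_zero.2 hxy)
  nlinarith [mul_pos h3 (pow_pos h4 2), sq_nonneg (inner ℝ x (x - y))]

lemma one_le_cd {x y : Fsp n} (hx : ‖x‖ < 1) (hy : ‖y‖ < 1) : 1 ≤ cd x y := by
  unfold cd
  rw [one_le_div (mul_pos (lam_pos hx) (lam_pos hy))]
  exact rcs hx.le hy.le

lemma one_lt_cd {x y : Fsp n} (hx : ‖x‖ < 1) (hy : ‖y‖ < 1) (h : x ≠ y) : 1 < cd x y := by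
  unfold cd
  rw [one_lt_div (mul_pos (lam_pos hx) (lam_pos hy))]
  exact rcs_strict hx hy h

lemma cd_self {x : Fsp n} (hx : ‖x‖ < 1) : cd x x = 1 := by
  unfold cd
  rw [real_inner_self_eq_norm_sq, ← lam_sq hx.le, ← sq, div_self]
  exact (pow_pos (lam_pos hx) 2).ne'

/-- The comparison of the hyperbolic distance with a number in terms of `cd`. -/
lemma hypDist_le_iff {x y : Fsp n} (hx : ‖x‖ < 1) (hy : ‖y‖ < 1) {D : ℝ} (hD : 0 ≤ D) :
    hypDist x y ≤ D ↔ cd x y ≤ Real.cosh D := by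
  have h : hypDist x y = Real.arcosh (cd x y) := by
    unfold hypDist arcosh Real.arcosh cd lam
    rw [Real.sqrt_mul (one_sub_sq_pos hx).le]
  have h1 := one_le_cd hx hy
  rw [h]
  conv_lhs => rw [← Real.arcosh_cosh hD]
  exact Real.arcosh_le_arcosh (by linarith) (Real.cosh_pos D)

lemma Q_comm (u v : ℝ × Fsp n) : Q u v = Q v u := by
  unfold Q; rw [real_inner_comm, mul_comm]

lemma Q_add_left (u v w : ℝ × Fsp n) : Q (u + v) w = Q u w + Q v w := by
  simp only [Q, Prod.fst_add, Prod.snd_add, inner_add_left]; ring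

lemma Q_sub_left (u v w : ℝ × Fsp n) : Q (u - v) w = Q u w - Q v w := by
  simp only [Q, Prod.fst_sub, Prod.snd_sub, inner_sub_left]; ring

lemma Q_smul_left (t : ℝ) (u w : ℝ × Fsp n) : Q (t • u) w = t * Q u w := by
  simp only [Q, Prod.smul_fst, Prod.smul_snd, real_inner_smul_left, smul_eq_mul]; ring

lemma Q_add_right (u v w : ℝ × Fsp n) : Q w (u + v) = Q w u + Q w v := by
  rw [Q_comm, Q_add_left, Q_comm u, Q_comm v]

lemma Q_sub_right (u v w : ℝ × Fsp n) : Q w (u - v) = Q w u - Q w v := by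
  rw [Q_comm, Q_sub_left, Q_comm u, Q_comm v]

lemma Q_smul_right (t : ℝ) (u w : ℝ × Fsp n) : Q w (t • u) = t * Q w u := by
  rw [Q_comm, Q_smul_left, Q_comm u]

lemma continuous_Q : Continuous fun p : (ℝ × Fsp n) × (ℝ × Fsp n) => Q p.1 p.2 := by
  unfold Q; fun_prop

lemma Q_lift (x y : Fsp n) : Q (lift x) (lift y) = cd x y := by
  simp only [Q, lift, cd, real_inner_smul_left, real_inner_smul_right, div_eq_mul_inv, mul_inv]
  ring

lemma lift_fst_pos {x : Fsp n} (hx : ‖x‖ < 1) : 0 < (lift x).1 := inv_pos.2 (lam_pos hx)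

lemma proj_lift {x : Fsp n} (hx : ‖x‖ < 1) : proj (lift x) = x := by
  have := (lam_pos hx).ne'
  simp [proj, lift, smul_smul, this]

lemma proj_smul {t : ℝ} (ht : t ≠ 0) (v : ℝ × Fsp n) : proj (t • v) = proj v := by
  simp only [proj, Prod.smul_fst, Prod.smul_snd, smul_eq_mul, smul_smul, mul_inv]
  congr 1; field_simp

lemma one_sub_norm_proj_sq {v : ℝ × Fsp n} (hv : 0 < v.1) :
    1 - ‖proj v‖ ^ 2 = Q v v / v.1 ^ 2 := by
  simp only [proj, Q, norm_smul, norm_inv, Real.norm_eq_abs, mul_pow, real_inner_self_eq_norm_sq,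
    inv_pow, sq_abs]
  field_simp

lemma norm_proj_lt {v : ℝ × Fsp n} (hv : 0 < v.1) (hQ : 0 < Q v v) : ‖proj v‖ < 1 := by
  have h := one_sub_norm_proj_sq hv
  have : 0 < Q v v / v.1 ^ 2 := by positivity
  nlinarith [norm_nonneg (proj v)]

lemma lift_proj {v : ℝ × Fsp n} (hv : 0 < v.1) (hQ : 0 < Q v v) :
    lift (proj v) = (√(Q v v))⁻¹ • v := by
  have h : lam (proj v) = √(Q v v) / v.1 := by
    rw [lam, one_sub_norm_proj_sq hv, Real.sqrt_div hQ.le, Real.sqrt_sq hv.le]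
  have h1 : 0 < √(Q v v) := Real.sqrt_pos.2 hQ
  unfold lift
  rw [h]
  ext1
  · simp only [Prod.smul_fst, smul_eq_mul]; field_simp
  · simp only [Prod.smul_snd, proj, smul_smul]; congr 1; field_simp

lemma lift_injective {x y : Fsp n} (hx : ‖x‖ < 1) (hy : ‖y‖ < 1) (h : lift x = lift y) : x = y := by
  rw [← proj_lift hx, h, proj_lift hy]

lemma continuousAt_lift {x : Fsp n} (hx : ‖x‖ < 1) : ContinuousAt lift x := by
  have h0 := (lam_pos hx).ne'
  have h1 := (continuous_lam (n := n)).continuousAt (x := x)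
  unfold lift
  exact (h1.inv₀ h0).prodMk ((h1.inv₀ h0).smul continuousAt_id)

lemma continuousAt_proj {v : ℝ × Fsp n} (hv : 0 < v.1) : ContinuousAt proj v := by
  unfold proj
  exact (continuousAt_fst.inv₀ hv.ne').smul continuousAt_snd

/-- A unit timelike vector with positive product with some point of the upper sheet lies on the
upper sheet. -/
lemma fst_pos_of_Q {w : ℝ × Fsp n} {b : Fsp n} (hb : ‖b‖ < 1) (hw : Q w w = 1)
    (h : 0 < Q w (lift b)) : 0 < w.1 := by
  by_contra hneg
  have h0 : w.1 ≠ 0 := by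
    intro h0
    have : Q w w = 0 - ‖w.2‖ ^ 2 := by rw [Q, h0, real_inner_self_eq_norm_sq]; ring
    nlinarith [sq_nonneg ‖w.2‖]
  have hpos : 0 < ((-1 : ℝ) • w).1 := by
    simp only [Prod.smul_fst, smul_eq_mul]
    have := lt_of_le_of_ne (not_lt.1 hneg) h0
    linarith
  have hQ : Q ((-1 : ℝ) • w) ((-1 : ℝ) • w) = 1 := by rw [Q_smul_left, Q_smul_right, hw]; ring
  have h1 := one_le_cd (norm_proj_lt hpos (by rw [hQ]; norm_num)) hb
  rw [← Q_lift, lift_proj hpos (by rw [hQ]; norm_num), hQ, Real.sqrt_one, inv_one, one_smul,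
    Q_smul_left] at h1
  linarith

/-! ### Hyperbolic reflections -/

/-- The Lorentz reflection exchanging the lifts of `a` and `b`. -/
def refl (a b : Fsp n) : (ℝ × Fsp n) →ₗ[ℝ] (ℝ × Fsp n) where
  toFun v := v - (2 * Q v (lift a - lift b) / Q (lift a - lift b) (lift a - lift b)) •
    (lift a - lift b)
  map_add' u v := by rw [Q_add_left, mul_add, add_div, add_smul]; abel
  map_smul' t v := by
    rw [Q_smul_left, RingHom.id_apply, smul_sub t, smul_smul]
    congr 2; ring

lemma refl_apply (a b : Fsp n) (v : ℝ × Fsp n) : refl a b v =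
    v - (2 * Q v (lift a - lift b) / Q (lift a - lift b) (lift a - lift b)) •
    (lift a - lift b) := rfl

/-- The reflection of the Klein model exchanging `a` and `b`. -/
def rho (a b x : Fsp n) : Fsp n := proj (refl a b (lift x))

lemma Q_diff {a b : Fsp n} (ha : ‖a‖ < 1) (hb : ‖b‖ < 1) :
    Q (lift a - lift b) (lift a - lift b) = 2 - 2 * cd a b := by
  rw [Q_sub_left, Q_sub_right, Q_sub_right, Q_lift, Q_lift, Q_lift, Q_lift, cd_self ha, cd_self hb,
    cd_comm b a]
  ring

lemma Q_diff_neg {a b : Fsp n} (ha : ‖a‖ < 1) (hb : ‖b‖ < 1) (hab : a ≠ b) :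
    Q (lift a - lift b) (lift a - lift b) < 0 := by
  rw [Q_diff ha hb]
  linarith [one_lt_cd ha hb hab]

lemma refl_left {a b : Fsp n} (ha : ‖a‖ < 1) (hb : ‖b‖ < 1) (hab : a ≠ b) :
    refl a b (lift a) = lift b := by
  have h := Q_diff ha hb
  have h1 := one_lt_cd ha hb hab
  have h2 : Q (lift a) (lift a - lift b) = 1 - cd a b := by
    rw [Q_sub_right, Q_lift, Q_lift, cd_self ha]
  rw [refl_apply, h, h2]
  have h3 : 2 * (1 - cd a b) / (2 - 2 * cd a b) = 1 := by
    rw [div_eq_one_iff_eq] <;> [ring; linarith]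
  rw [h3, one_smul, sub_sub_cancel]

lemma refl_Q {a b : Fsp n} (ha : ‖a‖ < 1) (hb : ‖b‖ < 1) (hab : a ≠ b)
    (u v : ℝ × Fsp n) : Q (refl a b u) (refl a b v) = Q u v := by
  have h := (Q_diff_neg ha hb hab).ne
  simp only [refl_apply]
  generalize lift a - lift b = e at *
  simp only [Q_sub_left, Q_sub_right, Q_smul_left, Q_smul_right]
  rw [Q_comm e v]
  field_simp
  ring

lemma refl_refl {a b : Fsp n} (ha : ‖a‖ < 1) (hb : ‖b‖ < 1) (hab : a ≠ b)
    (v : ℝ × Fsp n) : refl a b (refl a b v) = v := by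
  have h := (Q_diff_neg ha hb hab).ne
  simp only [refl_apply]
  generalize lift a - lift b = e at *
  simp only [Q_sub_left, Q_smul_left]
  rw [sub_sub, ← add_smul]
  have : 2 * Q v e / Q e e + 2 * (Q v e - 2 * Q v e / Q e e * Q e e) / Q e e = 0 := by
    field_simp; ring
  rw [this, zero_smul, sub_zero]

lemma refl_right {a b : Fsp n} (ha : ‖a‖ < 1) (hb : ‖b‖ < 1) (hab : a ≠ b) :
    refl a b (lift b) = lift a := by
  rw [← refl_left ha hb hab, refl_refl ha hb hab]

lemma refl_lift_fst_pos {a b : Fsp n} (ha : ‖a‖ < 1) (hb : ‖b‖ < 1) (hab : a ≠ b)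
    {x : Fsp n} (hx : ‖x‖ < 1) : 0 < (refl a b (lift x)).1 := by
  apply fst_pos_of_Q hb
  · rw [refl_Q ha hb hab, Q_lift, cd_self hx]
  · rw [← refl_left ha hb hab, refl_Q ha hb hab, Q_lift]
    linarith [one_le_cd hx ha]

lemma refl_lift_Q {a b : Fsp n} (ha : ‖a‖ < 1) (hb : ‖b‖ < 1) (hab : a ≠ b)
    {x : Fsp n} (hx : ‖x‖ < 1) :
    Q (refl a b (lift x)) (refl a b (lift x)) = 1 := by
  rw [refl_Q ha hb hab, Q_lift, cd_self hx]

lemma norm_rho_lt {a b : Fsp n} (ha : ‖a‖ < 1) (hb : ‖b‖ < 1) (hab : a ≠ b)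
    {x : Fsp n} (hx : ‖x‖ < 1) : ‖rho a b x‖ < 1 :=
  norm_proj_lt (refl_lift_fst_pos ha hb hab hx) (by rw [refl_lift_Q ha hb hab hx]; norm_num)

lemma lift_rho {a b : Fsp n} (ha : ‖a‖ < 1) (hb : ‖b‖ < 1) (hab : a ≠ b)
    {x : Fsp n} (hx : ‖x‖ < 1) : lift (rho a b x) = refl a b (lift x) := by
  rw [rho, lift_proj (refl_lift_fst_pos ha hb hab hx) (by rw [refl_lift_Q ha hb hab hx]; norm_num),
    refl_lift_Q ha hb hab hx, Real.sqrt_one, inv_one, one_smul]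

lemma rho_rho {a b : Fsp n} (ha : ‖a‖ < 1) (hb : ‖b‖ < 1) (hab : a ≠ b)
    {x : Fsp n} (hx : ‖x‖ < 1) : rho a b (rho a b x) = x := by
  conv_lhs => rw [rho]
  rw [lift_rho ha hb hab hx, refl_refl ha hb hab, proj_lift hx]

lemma cd_rho {a b : Fsp n} (ha : ‖a‖ < 1) (hb : ‖b‖ < 1) (hab : a ≠ b)
    {x y : Fsp n} (hx : ‖x‖ < 1) (hy : ‖y‖ < 1) :
    cd (rho a b x) (rho a b y) = cd x y := by
  rw [← Q_lift, lift_rho ha hb hab hx, lift_rho ha hb hab hy, refl_Q ha hb hab, Q_lift]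

lemma rho_left {a b : Fsp n} (ha : ‖a‖ < 1) (hb : ‖b‖ < 1) (hab : a ≠ b) :
    rho a b a = b := by rw [rho, refl_left ha hb hab, proj_lift hb]

lemma rho_right {a b : Fsp n} (ha : ‖a‖ < 1) (hb : ‖b‖ < 1) (hab : a ≠ b) :
    rho a b b = a := by rw [rho, refl_right ha hb hab, proj_lift ha]

/-- Moving one of two points to the other side of the mirror. The sign of `cd z a - cd z b` tells
on which side `z` lies. -/
lemma cd_rho_right {a b : Fsp n} (ha : ‖a‖ < 1) (hb : ‖b‖ < 1) (hab : a ≠ b)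
    {x y : Fsp n} (hy : ‖y‖ < 1) :
    cd x (rho a b y) = cd x y + (cd x a - cd x b) * (cd y a - cd y b) / (cd a b - 1) := by
  have h1 := one_lt_cd ha hb hab
  rw [← Q_lift x, lift_rho ha hb hab hy, refl_apply, Q_diff ha hb, Q_sub_right, Q_smul_right,
    Q_sub_right, Q_sub_right]
  simp only [Q_lift]
  have h2 : 2 - 2 * cd a b ≠ 0 := by linarith
  have h3 : cd a b - 1 ≠ 0 := by linarith
  have h4 : 2 - 2 * cd a b = -2 * (cd a b - 1) := by ring
  rw [h4]
  field_simp
  ring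

lemma cd_le_cd_rho {a b : Fsp n} (ha : ‖a‖ < 1) (hb : ‖b‖ < 1) (hab : a ≠ b)
    {x y : Fsp n} (hy : ‖y‖ < 1) (h1 : cd x a ≤ cd x b) (h2 : cd y a ≤ cd y b) :
    cd x y ≤ cd x (rho a b y) := by
  rw [cd_rho_right ha hb hab hy]
  have h := one_lt_cd ha hb hab
  have : 0 ≤ (cd x a - cd x b) * (cd y a - cd y b) / (cd a b - 1) :=
    div_nonneg (mul_nonneg_of_nonpos_of_nonpos (by linarith) (by linarith)) (by linarith)
  linarith

lemma cd_lt_cd_rho {a b : Fsp n} (ha : ‖a‖ < 1) (hb : ‖b‖ < 1) (hab : a ≠ b)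
    {x y : Fsp n} (hy : ‖y‖ < 1) (h1 : cd x a < cd x b) (h2 : cd y a < cd y b) :
    cd x y < cd x (rho a b y) := by
  rw [cd_rho_right ha hb hab hy]
  have h := one_lt_cd ha hb hab
  have : 0 < (cd x a - cd x b) * (cd y a - cd y b) / (cd a b - 1) :=
    div_pos (mul_pos_of_neg_of_neg (by linarith) (by linarith)) (by linarith)
  linarith

lemma rho_eq_self {a b : Fsp n}
    {x : Fsp n} (hx : ‖x‖ < 1) (h : cd x a = cd x b) : rho a b x = x := by
  rw [rho, refl_apply, Q_sub_right, Q_lift, Q_lift, h, sub_self, mul_zero, zero_div, zero_smul,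
    sub_zero, proj_lift hx]

/-- Reflections exchange the two sides of their mirror. -/
lemma cd_rho_left_a {a b : Fsp n} (ha : ‖a‖ < 1) (hb : ‖b‖ < 1) (hab : a ≠ b)
    {x : Fsp n} (hx : ‖x‖ < 1) : cd (rho a b x) a = cd x b := by
  have h := cd_rho ha hb hab hx hb
  rwa [rho_right ha hb hab] at h

lemma cd_rho_left_b {a b : Fsp n} (ha : ‖a‖ < 1) (hb : ‖b‖ < 1) (hab : a ≠ b)
    {x : Fsp n} (hx : ‖x‖ < 1) : cd (rho a b x) b = cd x a := by
  have h := cd_rho ha hb hab hx ha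
  rwa [rho_left ha hb hab] at h

/-- Joint continuity of the reflection exchanging `a` and `b` in `b` and in the reflected point. -/
lemma continuousAt_rho {a b : Fsp n} (ha : ‖a‖ < 1) (hb : ‖b‖ < 1) (hab : a ≠ b)
    {x : Fsp n} (hx : ‖x‖ < 1) :
    ContinuousAt (fun p : Fsp n × Fsp n => rho a p.1 p.2) (b, x) := by
  have h := (Q_diff_neg ha hb hab).ne
  have h1 : ContinuousAt (fun p : Fsp n × Fsp n => lift p.1) (b, x) :=
    ContinuousAt.comp (f := Prod.fst) (g := lift) (x := (b, x)) (continuousAt_lift hb)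
      continuousAt_fst
  have h2 : ContinuousAt (fun p : Fsp n × Fsp n => lift p.2) (b, x) :=
    ContinuousAt.comp (f := Prod.snd) (g := lift) (x := (b, x)) (continuousAt_lift hx)
      continuousAt_snd
  have h3 : ContinuousAt (fun p : Fsp n × Fsp n => lift a - lift p.1) (b, x) :=
    continuousAt_const.sub h1
  have h4 : ContinuousAt (fun p : Fsp n × Fsp n => refl a p.1 (lift p.2)) (b, x) := by
    simp only [refl_apply]
    have h5 : ContinuousAt (fun p : Fsp n × Fsp n => Q (lift p.2) (lift a - lift p.1)) (b, x) :=
      ContinuousAt.comp (f := fun p : Fsp n × Fsp n => (lift p.2, lift a - lift p.1))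
        (x := (b, x)) continuous_Q.continuousAt (h2.prodMk h3)
    have h6 : ContinuousAt (fun p : Fsp n × Fsp n => Q (lift a - lift p.1) (lift a - lift p.1))
        (b, x) :=
      ContinuousAt.comp (f := fun p : Fsp n × Fsp n => (lift a - lift p.1, lift a - lift p.1))
        (x := (b, x)) continuous_Q.continuousAt (h3.prodMk h3)
    exact h2.sub (((continuousAt_const.mul h5).div h6 h).smul h3)
  exact ContinuousAt.comp (f := fun p : Fsp n × Fsp n => refl a p.1 (lift p.2)) (g := proj)
    (x := (b, x)) (continuousAt_proj (refl_lift_fst_pos ha hb hab hx)) h4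


lemma continuousAt_cd {x y : Fsp n} (hx : ‖x‖ < 1) (hy : ‖y‖ < 1) :
    ContinuousAt (fun p : Fsp n × Fsp n => cd p.1 p.2) (x, y) := by
  have := continuous_lam (n := n)
  unfold cd
  refine ContinuousAt.div (by fun_prop) (by fun_prop) ?_
  exact (mul_pos (lam_pos hx) (lam_pos hy)).ne'

/-! ### Invariance of the hyperbolic volume -/

/-- The part below the hyperboloid of the cone over a subset of the Klein model. -/
def cone (A : Set (Fsp n)) : Set (ℝ × Fsp n) := {v | 0 < v.1 ∧ proj v ∈ A ∧ Q v v ≤ 1}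

lemma measurable_proj : Measurable (proj : ℝ × Fsp n → Fsp n) := by
  unfold proj; exact measurable_fst.inv.smul measurable_snd

lemma measurable_lift : Measurable (lift : Fsp n → ℝ × Fsp n) := by
  have h := (continuous_lam (n := n)).measurable
  unfold lift
  exact h.inv.prodMk (h.inv.smul measurable_id)

lemma measurable_rho (a b : Fsp n) : Measurable (rho a b) :=
  measurable_proj.comp ((refl a b).continuous_of_finiteDimensional.measurable.comp measurable_lift)

lemma measurableSet_cone {A : Set (Fsp n)} (hA : MeasurableSet A) : MeasurableSet (cone A) := by
  have h1 : Measurable fun v : ℝ × Fsp n => Q v v :=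
    (continuous_Q.comp (continuous_id.prodMk continuous_id)).measurable
  exact (measurableSet_lt measurable_const measurable_fst).inter
    ((measurable_proj hA).inter (measurableSet_le h1 measurable_const))

lemma lintegral_pow_Ioc {c : ℝ} (hc : 0 ≤ c) :
    ∫⁻ t in Set.Ioc 0 c, ENNReal.ofReal (t ^ n) = ENNReal.ofReal (c ^ (n + 1) / (n + 1)) := by
  rw [← ofReal_integral_eq_lintegral_ofReal]
  · rw [← intervalIntegral.integral_of_le hc, integral_pow]
    simp
  · exact (continuous_pow n).integrableOn_Ioc
  · filter_upwards [ae_restrict_mem measurableSet_Ioc] with t ht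
    exact pow_nonneg ht.1.le n

lemma Q_pair_smul (t : ℝ) (x : Fsp n) : Q (t, t • x) (t, t • x) = t ^ 2 * (1 - ‖x‖ ^ 2) := by
  simp only [Q, inner_smul_left, inner_smul_right, real_inner_self_eq_norm_sq]
  simp; ring

/-- The hyperbolic volume is proportional to the Lebesgue measure of the cone. -/
lemma hypVol_eq_cone {A : Set (Fsp n)} (hA : MeasurableSet A) (hA1 : ∀ x ∈ A, ‖x‖ < 1) :
    hypVol n A = ENNReal.ofReal (n + 1) * volume (cone A) := by
  have hcone := measurableSet_cone hA
  let S : Set (ℝ × Fsp n) := {p | 0 < p.1 ∧ p.2 ∈ A ∧ p.1 ^ 2 * (1 - ‖p.2‖ ^ 2) ≤ 1}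
  have hS : MeasurableSet S := by
    have h0 : Measurable fun p : ℝ × Fsp n => p.1 ^ 2 * (1 - ‖p.2‖ ^ 2) := by fun_prop
    exact (measurableSet_lt measurable_const measurable_fst).inter
      ((measurable_snd hA).inter (measurableSet_le h0 measurable_const))
  let G : ℝ → Fsp n → ENNReal := fun t x => S.indicator (fun p => ENNReal.ofReal (p.1 ^ n)) (t, x)
  have hG : Measurable (Function.uncurry G) := by
    have : Function.uncurry G = S.indicator (fun p => ENNReal.ofReal (p.1 ^ n)) := rfl
    rw [this]
    exact Measurable.indicator (by fun_prop) hS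
  have h1 : volume (cone A) = ∫⁻ t, ∫⁻ x, G t x := by
    rw [Measure.volume_eq_prod, Measure.prod_apply hcone]
    refine lintegral_congr fun t => ?_
    by_cases ht : 0 < t
    · have e1 : Prod.mk t ⁻¹' cone A = t • {x : Fsp n | (t, x) ∈ S} := by
        ext y
        rw [Set.mem_smul_set_iff_inv_smul_mem₀ ht.ne']
        have hy : (t, y) = ((t, t • (t⁻¹ • y)) : ℝ × Fsp n) := by
          rw [smul_smul, mul_inv_cancel₀ ht.ne', one_smul]
        have hQ : Q (t, y) (t, y) = t ^ 2 * (1 - ‖t⁻¹ • y‖ ^ 2) := by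
          conv_lhs => rw [hy]
          exact Q_pair_smul _ _
        simp only [cone, Set.mem_preimage, Set.mem_ofPred_eq, hQ, S, proj]
      have e2 : ∀ x, G t x = {x : Fsp n | (t, x) ∈ S}.indicator
          (fun _ => ENNReal.ofReal (t ^ n)) x := fun x => rfl
      have e3 : MeasurableSet {x : Fsp n | (t, x) ∈ S} := measurable_prodMk_left hS
      simp_rw [e2]
      rw [lintegral_indicator_const e3, e1, Measure.addHaar_smul]
      simp [abs_of_pos ht]
    · have e1 : Prod.mk t ⁻¹' cone A = ∅ := by
        ext y; simp [cone, ht]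
      have e2 : ∀ x, G t x = 0 := by
        intro x
        apply Set.indicator_of_notMem
        simp [S, ht]
      simp [e1, e2]
  have h2 : ∀ x, ∫⁻ t, G t x = A.indicator
      (fun x => ENNReal.ofReal ((lam x)⁻¹ ^ (n + 1) / (n + 1))) x := by
    intro x
    by_cases hx : x ∈ A
    · rw [Set.indicator_of_mem hx]
      have hl := lam_pos (hA1 x hx)
      rw [← lintegral_pow_Ioc (inv_pos.2 hl).le, ← lintegral_indicator measurableSet_Ioc]
      refine lintegral_congr fun t => ?_
      have : (t, x) ∈ S ↔ t ∈ Set.Ioc 0 (lam x)⁻¹ := by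
        simp only [S, Set.mem_ofPred_eq, Set.mem_Ioc, hx, true_and]
        refine and_congr_right fun ht => ?_
        rw [← lam_sq (hA1 x hx).le, ← mul_pow, sq_le_one_iff₀ (by positivity), ← le_div_iff₀ hl,
          one_div]
      by_cases hm : (t, x) ∈ S
      · rw [Set.indicator_of_mem (this.1 hm)]
        exact Set.indicator_of_mem hm _
      · rw [Set.indicator_of_notMem (mt this.2 hm)]
        exact Set.indicator_of_notMem hm _
    · rw [Set.indicator_of_notMem hx]
      have : ∀ t, G t x = 0 := fun t => Set.indicator_of_notMem (by simp [S, hx]) _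
      simp [this]
  rw [h1, lintegral_lintegral_swap hG.aemeasurable]
  simp_rw [h2]
  rw [lintegral_indicator hA, hypVol, withDensity_apply _ hA, ← lintegral_const_mul']
  · refine setLIntegral_congr_fun hA fun x hx => ?_
    rw [← ENNReal.ofReal_mul (by positivity)]
    congr 1
    have hp := one_sub_sq_pos (hA1 x hx)
    have e : (lam x)⁻¹ ^ (n + 1) = (1 - ‖x‖ ^ 2) ^ (-(((n : ℝ) + 1) / 2)) := by
      rw [lam, Real.sqrt_eq_rpow, ← Real.rpow_neg hp.le, ← Real.rpow_natCast, ← Real.rpow_mul hp.le]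
      congr 1; push_cast; ring
    rw [e]
    field_simp
  · simp

lemma abs_det_refl {a b : Fsp n} (ha : ‖a‖ < 1) (hb : ‖b‖ < 1) (hab : a ≠ b) :
    |LinearMap.det (refl a b)| = 1 := by
  have h : refl a b ∘ₗ refl a b = LinearMap.id := LinearMap.ext fun v => refl_refl ha hb hab v
  have h1 := congrArg LinearMap.det h
  rw [LinearMap.det_comp, LinearMap.det_id] at h1
  rcases mul_self_eq_one_iff.1 h1 with h2 | h2 <;> rw [h2] <;> simp

lemma image_rho_eq {a b : Fsp n} (ha : ‖a‖ < 1) (hb : ‖b‖ < 1) (hab : a ≠ b)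
    {A : Set (Fsp n)} (hA1 : ∀ x ∈ A, ‖x‖ < 1) :
    rho a b '' A = {x | ‖x‖ < 1} ∩ rho a b ⁻¹' A := by
  ext x
  constructor
  · rintro ⟨y, hy, rfl⟩
    refine ⟨norm_rho_lt ha hb hab (hA1 y hy), ?_⟩
    rwa [Set.mem_preimage, rho_rho ha hb hab (hA1 y hy)]
  · rintro ⟨h1, h2⟩
    exact ⟨_, h2, rho_rho ha hb hab h1⟩

lemma measurableSet_image_rho {a b : Fsp n} (ha : ‖a‖ < 1) (hb : ‖b‖ < 1) (hab : a ≠ b)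
    {A : Set (Fsp n)} (hA : MeasurableSet A) (hA1 : ∀ x ∈ A, ‖x‖ < 1) :
    MeasurableSet (rho a b '' A) := by
  rw [image_rho_eq ha hb hab hA1]
  exact (measurableSet_lt measurable_norm measurable_const).inter (measurable_rho a b hA)

lemma mem_cone_iff {A : Set (Fsp n)} (hA1 : ∀ x ∈ A, ‖x‖ < 1) (v : ℝ × Fsp n) :
    v ∈ cone A ↔ ∃ x ∈ A, ∃ t : ℝ, 0 < t ∧ t ≤ 1 ∧ v = t • lift x := by
  constructor
  · rintro ⟨h1, h2, h3⟩
    have hQ : 0 < Q v v := by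
      have := one_sub_norm_proj_sq h1
      have h4 := one_sub_sq_pos (hA1 _ h2)
      rw [this] at h4
      exact (div_pos_iff_of_pos_right (by positivity)).1 h4
    refine ⟨_, h2, √(Q v v), Real.sqrt_pos.2 hQ, Real.sqrt_le_one.2 h3, ?_⟩
    rw [lift_proj h1 hQ, smul_smul, mul_inv_cancel₀ (Real.sqrt_pos.2 hQ).ne', one_smul]
  · rintro ⟨x, hx, t, ht, ht1, rfl⟩
    refine ⟨mul_pos ht (lift_fst_pos (hA1 x hx)), ?_, ?_⟩
    · rwa [proj_smul ht.ne', proj_lift (hA1 x hx)]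
    · rw [Q_smul_left, Q_smul_right, Q_lift, cd_self (hA1 x hx)]
      nlinarith

lemma hypVol_image_rho {a b : Fsp n} (ha : ‖a‖ < 1) (hb : ‖b‖ < 1) (hab : a ≠ b)
    {A : Set (Fsp n)} (hA : MeasurableSet A) (hA1 : ∀ x ∈ A, ‖x‖ < 1) :
    hypVol n (rho a b '' A) = hypVol n A := by
  have hB1 : ∀ x ∈ rho a b '' A, ‖x‖ < 1 := by
    rintro _ ⟨y, hy, rfl⟩; exact norm_rho_lt ha hb hab (hA1 y hy)
  rw [hypVol_eq_cone hA hA1, hypVol_eq_cone (measurableSet_image_rho ha hb hab hA hA1) hB1]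
  have hcone : cone (rho a b '' A) = refl a b '' cone A := by
    ext v
    rw [mem_cone_iff hB1]
    constructor
    · rintro ⟨_, ⟨x, hx, rfl⟩, t, ht, ht1, rfl⟩
      refine ⟨t • lift x, (mem_cone_iff hA1 _).2 ⟨x, hx, t, ht, ht1, rfl⟩, ?_⟩
      rw [map_smul, lift_rho ha hb hab (hA1 x hx)]
    · rintro ⟨w, hw, rfl⟩
      obtain ⟨x, hx, t, ht, ht1, rfl⟩ := (mem_cone_iff hA1 _).1 hw
      refine ⟨_, ⟨x, hx, rfl⟩, t, ht, ht1, ?_⟩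
      rw [map_smul, lift_rho ha hb hab (hA1 x hx)]
  have : (volume : Measure (ℝ × Fsp n)).IsAddHaarMeasure :=
    inferInstanceAs ((volume : Measure ℝ).prod (volume : Measure (Fsp n))).IsAddHaarMeasure
  rw [hcone, Measure.addHaar_image_linearMap, abs_det_refl ha hb hab, ENNReal.ofReal_one, one_mul]

/-! ### Admissible and extremal sets -/

/-- Compact subsets of the Klein model with `cosh` of the diameter at most `C`. -/
structure Adm (C : ℝ) (K : Set (Fsp n)) : Prop where
  compact : IsCompact K
  ball : ∀ x ∈ K, ‖x‖ < 1
  diam : ∀ x ∈ K, ∀ y ∈ K, 0 ≤ F C x y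

/-- Admissible sets of maximal (and positive) hyperbolic volume. -/
structure Ext (C : ℝ) (K : Set (Fsp n)) : Prop where
  adm : Adm C K
  pos : 0 < hypVol n K
  max : ∀ K', Adm C K' → hypVol n K' ≤ hypVol n K

lemma Adm.cd_le {C : ℝ} {K : Set (Fsp n)} (hK : Adm C K) {x y : Fsp n} (hx : x ∈ K) (hy : y ∈ K) :
    cd x y ≤ C :=
  (F_nonneg_iff (hK.ball x hx) (hK.ball y hy)).1 (hK.diam x hx y hy)

lemma Ext.nonempty {C : ℝ} {K : Set (Fsp n)} (hK : Ext C K) : K.Nonempty := by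
  rcases K.eq_empty_or_nonempty with rfl | h
  · have := hK.pos; simp at this
  · exact h

lemma lam_concave : ConcaveOn ℝ (Metric.ball (0 : Fsp n) 1) lam := by
  refine ⟨convex_ball _ _, ?_⟩
  intro y hy z hz s t hs ht hst
  have hr : s • y + t • z ∈ Metric.ball (0 : Fsp n) 1 := convex_ball _ _ hy hz hs ht hst
  rw [mem_ball_zero_iff] at hy hz hr
  set r := s • y + t • z with hrdef
  have h1 := mul_le_mul_of_nonneg_left (rcs hy.le hr.le) hs
  have h2 := mul_le_mul_of_nonneg_left (rcs hz.le hr.le) ht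
  have h3 : s * inner ℝ y r + t * inner ℝ z r = ‖r‖ ^ 2 := by
    rw [← real_inner_self_eq_norm_sq]
    conv_rhs => rw [hrdef, inner_add_left, real_inner_smul_left, real_inner_smul_left, ← hrdef]
  have h4 := lam_sq hr.le
  have h5 := lam_pos hr
  refine le_of_mul_le_mul_right ?_ h5
  simp only [smul_eq_mul]
  nlinarith

lemma F_concave {C : ℝ} (hC : 0 ≤ C) (x : Fsp n) :
    ConcaveOn ℝ (Metric.ball (0 : Fsp n) 1) (F C x) := by
  refine ⟨convex_ball _ _, ?_⟩
  intro y hy z hz s t hs ht hst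
  have h := lam_concave.2 hy hz hs ht hst
  have h1 := mul_le_mul_of_nonneg_left h (mul_nonneg hC (lam_nonneg x))
  simp only [smul_eq_mul] at h1 ⊢
  simp only [F, inner_add_right, inner_smul_right]
  have : s * 1 + t * 1 = 1 := by linarith
  nlinarith

lemma F_self_nonneg {C : ℝ} (hC : 1 ≤ C) {x : Fsp n} (hx : ‖x‖ < 1) : 0 ≤ F C x x := by
  rw [F_nonneg_iff hx hx, cd_self hx]; exact hC

lemma continuous_F_right (C : ℝ) (x : Fsp n) : Continuous (F C x) := by
  have := continuous_lam (n := n)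
  unfold F; fun_prop

/-- Hyperbolic closed balls are closed in the ambient Euclidean space. -/
lemma isClosed_hypBall (C : ℝ) {x : Fsp n} (hx : ‖x‖ < 1) :
    IsClosed {y ∈ Metric.ball (0 : Fsp n) 1 | 0 ≤ F C x y} := by
  have h : {y ∈ Metric.ball (0 : Fsp n) 1 | 0 ≤ F C x y} = {y | ‖y‖ ≤ 1} ∩ {y | 0 ≤ F C x y} := by
    ext y
    constructor
    · rintro ⟨h1, h2⟩; exact ⟨(mem_ball_zero_iff.1 h1).le, h2⟩
    · rintro ⟨h1, h2⟩; exact ⟨mem_ball_zero_iff.2 (norm_lt_of_F_nonneg hx h1 h2), h2⟩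
  rw [h]
  exact (isClosed_le continuous_norm continuous_const).inter
    (isClosed_le continuous_const (continuous_F_right C x))

/-- The closed hyperbolic convex hull, which is the Euclidean one in the Klein model, does not
increase the diameter. -/
lemma Adm.closure_hull {C : ℝ} (hC : 0 ≤ C) {K : Set (Fsp n)} (hK : Adm C K) (hne : K.Nonempty) :
    Adm C (closure (convexHull ℝ K)) := by
  have h1 : ∀ x ∈ K, closure (convexHull ℝ K) ⊆ {y ∈ Metric.ball (0 : Fsp n) 1 | 0 ≤ F C x y} := by
    intro x hx
    refine closure_minimal (convexHull_min (fun y hy => ?_) ((F_concave hC x).convex_ge 0))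
      (isClosed_hypBall C (hK.ball x hx))
    exact ⟨mem_ball_zero_iff.2 (hK.ball y hy), hK.diam x hx y hy⟩
  obtain ⟨x₀, hx₀⟩ := hne
  have hball : ∀ x ∈ closure (convexHull ℝ K), ‖x‖ < 1 := fun x hx =>
    mem_ball_zero_iff.1 (h1 x₀ hx₀ hx).1
  refine ⟨?_, hball, ?_⟩
  · refine (isCompact_closedBall (0 : Fsp n) 1).of_isClosed_subset isClosed_closure fun x hx => ?_
    exact mem_closedBall_zero_iff.2 (hball x hx).le
  · intro x hx y hy
    have : closure (convexHull ℝ K) ⊆ {x ∈ Metric.ball (0 : Fsp n) 1 | 0 ≤ F C y x} := by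
      refine closure_minimal (convexHull_min (fun x hx => ?_) ((F_concave hC y).convex_ge 0))
        (isClosed_hypBall C (hball y hy))
      exact ⟨mem_ball_zero_iff.2 (hK.ball x hx), by rw [F_comm]; exact (h1 x hx hy).2⟩
    rw [F_comm]
    exact (this hx).2

lemma volume_le_hypVol {A : Set (Fsp n)} (hA : MeasurableSet A) (hA1 : ∀ x ∈ A, ‖x‖ < 1) :
    volume A ≤ hypVol n A := by
  rw [hypVol, withDensity_apply _ hA, ← setLIntegral_one]
  refine setLIntegral_mono' hA fun x hx => ?_
  rw [← ENNReal.ofReal_one]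
  apply ENNReal.ofReal_le_ofReal
  have h := one_sub_sq_pos (hA1 x hx)
  refine Real.one_le_rpow_of_pos_of_le_one_of_nonpos h ?_ ?_
  · nlinarith [sq_nonneg ‖x‖]
  · have : (0 : ℝ) ≤ n := Nat.cast_nonneg n
    linarith

lemma hypVol_lt_top {K : Set (Fsp n)} (hK : IsCompact K) (hK1 : ∀ x ∈ K, ‖x‖ < 1) :
    hypVol n K < ⊤ := by
  rw [hypVol, withDensity_apply _ hK.measurableSet]
  have : IntegrableOn (fun x : Fsp n => (1 - ‖x‖ ^ 2) ^ (-(((n : ℝ) + 1) / 2))) K := by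
    apply ContinuousOn.integrableOn_compact hK
    apply ContinuousOn.rpow_const
    · fun_prop
    · intro x hx; exact Or.inl (one_sub_sq_pos (hK1 x hx)).ne'
  exact Integrable.lintegral_lt_top this

lemma volume_ne_zero_of_hypVol {A : Set (Fsp n)} (h : 0 < hypVol n A) : volume A ≠ 0 := by
  intro h0
  exact h.ne' (withDensity_absolutelyContinuous _ _ h0)

/-- Adding an admissible point to an extremal set and taking the convex hull gains nothing: otherwise
the hull, being the closure of its interior, would have larger volume. -/
lemma Ext.hull_insert {C : ℝ} (hC : 1 ≤ C) {K : Set (Fsp n)} (hK : Ext C K) {y : Fsp n}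
    (hy : ‖y‖ < 1) (h : ∀ k ∈ K, 0 ≤ F C y k) :
    closure (convexHull ℝ (insert y K)) ⊆ K ∧
      (interior (closure (convexHull ℝ (insert y K)))).Nonempty := by
  have hA : Adm C (insert y K) := by
    refine ⟨hK.adm.compact.insert y, ?_, ?_⟩
    · rintro x (rfl | hx)
      exacts [hy, hK.adm.ball x hx]
    · rintro x (rfl | hx) z (rfl | hz)
      · exact F_self_nonneg hC hy
      · exact h z hz
      · rw [F_comm]; exact h x hx
      · exact hK.adm.diam x hx z hz
  have hL := hA.closure_hull (by linarith) (Set.insert_nonempty y K)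
  set L := closure (convexHull ℝ (insert y K)) with hLdef
  have hKL : K ⊆ L :=
    (Set.subset_insert y K).trans ((subset_convexHull ℝ _).trans subset_closure)
  have hLc : Convex ℝ L := (convex_convexHull ℝ _).closure
  have hLne : (interior L).Nonempty := by
    by_contra hne
    rw [Set.not_nonempty_iff_eq_empty] at hne
    have h1 : L ⊆ frontier L := by
      rw [hL.compact.isClosed.frontier_eq, hne]; simp
    have h2 : volume L = 0 := measure_mono_null h1 (hLc.addHaar_frontier volume)
    exact volume_ne_zero_of_hypVol hK.pos (measure_mono_null hKL h2)
  refine ⟨?_, hLne⟩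
  have h1 : hypVol n (L \ K) = 0 := by
    rw [measure_sdiff hKL hK.adm.compact.measurableSet.nullMeasurableSet
      (hypVol_lt_top hK.adm.compact hK.adm.ball).ne]
    exact tsub_eq_zero_of_le (hK.max L hL)
  have h2 : volume (interior L \ K) = 0 := by
    have hm : MeasurableSet (interior L \ K) :=
      isOpen_interior.measurableSet.diff hK.adm.compact.measurableSet
    refine le_antisymm ?_ zero_le
    refine (volume_le_hypVol hm fun x hx => hL.ball x (interior_subset hx.1)).trans ?_
    rw [← h1]
    exact measure_mono (Set.sdiff_subset_sdiff_left interior_subset)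
  have h3 : interior L \ K = ∅ :=
    (IsOpen.measure_eq_zero_iff volume (isOpen_interior.sdiff hK.adm.compact.isClosed)).1 h2
  have h4 : interior L ⊆ K := Set.sdiff_eq_empty.1 h3
  calc L ⊆ closure L := subset_closure
    _ = closure (interior L) := (hLc.closure_interior_eq_closure_of_nonempty_interior hLne).symm
    _ ⊆ K := hK.adm.compact.isClosed.closure_subset_iff.2 h4

/-- Extremal sets are complete: points within the maximal distance of all their points belong to
them. -/
lemma Ext.complete {C : ℝ} (hC : 1 ≤ C) {K : Set (Fsp n)} (hK : Ext C K) {y : Fsp n}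
    (hy : ‖y‖ < 1) (h : ∀ k ∈ K, 0 ≤ F C y k) : y ∈ K :=
  (hK.hull_insert hC hy h).1 (subset_closure (subset_convexHull ℝ _ (Set.mem_insert y K)))

lemma Ext.hull_eq {C : ℝ} (hC : 1 ≤ C) {K : Set (Fsp n)} (hK : Ext C K) :
    closure (convexHull ℝ K) = K ∧ (interior K).Nonempty := by
  obtain ⟨y, hy⟩ := hK.nonempty
  obtain ⟨h1, h2⟩ := hK.hull_insert hC (hK.adm.ball y hy) (fun k hk => hK.adm.diam y hy k hk)
  rw [Set.insert_eq_of_mem hy] at h1 h2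
  have : closure (convexHull ℝ K) = K :=
    h1.antisymm ((subset_convexHull ℝ K).trans subset_closure)
  exact ⟨this, by rwa [this] at h2⟩

lemma Ext.convex {C : ℝ} (hC : 1 ≤ C) {K : Set (Fsp n)} (hK : Ext C K) : Convex ℝ K := by
  rw [← (hK.hull_eq hC).1]; exact (convex_convexHull ℝ K).closure

/-! ### Transport by reflections and polarization -/

lemma isCompact_image_rho {a b : Fsp n} (ha : ‖a‖ < 1) (hb : ‖b‖ < 1) (hab : a ≠ b)
    {K : Set (Fsp n)} (hK : IsCompact K) (hK1 : ∀ x ∈ K, ‖x‖ < 1) : IsCompact (rho a b '' K) := by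
  refine hK.image_of_continuousOn fun x hx => ContinuousAt.continuousWithinAt ?_
  exact ContinuousAt.comp (f := fun x : Fsp n => (b, x)) (x := x)
    (continuousAt_rho ha hb hab (hK1 x hx)) (by fun_prop)

lemma Adm.image_rho {C : ℝ} {a b : Fsp n} (ha : ‖a‖ < 1) (hb : ‖b‖ < 1) (hab : a ≠ b)
    {K : Set (Fsp n)} (hK : Adm C K) : Adm C (rho a b '' K) := by
  refine ⟨isCompact_image_rho ha hb hab hK.compact hK.ball, ?_, ?_⟩
  · rintro _ ⟨y, hy, rfl⟩; exact norm_rho_lt ha hb hab (hK.ball y hy)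
  · rintro _ ⟨x, hx, rfl⟩ _ ⟨y, hy, rfl⟩
    have hx1 := hK.ball x hx
    have hy1 := hK.ball y hy
    rw [F_nonneg_iff (norm_rho_lt ha hb hab hx1) (norm_rho_lt ha hb hab hy1),
      cd_rho ha hb hab hx1 hy1]
    exact hK.cd_le hx hy

lemma Ext.of_le {C : ℝ} {K L : Set (Fsp n)} (hK : Ext C K) (hL : Adm C L)
    (h : hypVol n K ≤ hypVol n L) : Ext C L :=
  ⟨hL, hK.pos.trans_le h, fun K' hK' => (hK.max K' hK').trans h⟩

lemma Ext.image_rho {C : ℝ} {a b : Fsp n} (ha : ‖a‖ < 1) (hb : ‖b‖ < 1) (hab : a ≠ b)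
    {K : Set (Fsp n)} (hK : Ext C K) : Ext C (rho a b '' K) :=
  hK.of_le (hK.adm.image_rho ha hb hab)
    (hypVol_image_rho ha hb hab hK.adm.compact.measurableSet hK.adm.ball).ge

/-- The closed half-space of points not farther from `a` than from `b`, written so that it is closed
in the whole Euclidean space. -/
def side (a b : Fsp n) : Set (Fsp n) :=
  {z | (1 - inner ℝ z a) * lam b ≤ (1 - inner ℝ z b) * lam a}

lemma isClosed_side (a b : Fsp n) : IsClosed (side a b) :=
  isClosed_le (by fun_prop) (by fun_prop)

lemma mem_side {a b z : Fsp n} (ha : ‖a‖ < 1) (hb : ‖b‖ < 1) (hz : ‖z‖ < 1) :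
    z ∈ side a b ↔ cd z a ≤ cd z b := by
  have h1 := lam_pos ha; have h2 := lam_pos hb; have h3 := lam_pos hz
  unfold cd
  rw [div_le_div_iff₀ (by positivity) (by positivity)]
  change (1 - inner ℝ z a) * lam b ≤ (1 - inner ℝ z b) * lam a ↔ _
  rw [show (1 - inner ℝ z a) * (lam z * lam b) = lam z * ((1 - inner ℝ z a) * lam b) by ring,
    show (1 - inner ℝ z b) * (lam z * lam a) = lam z * ((1 - inner ℝ z b) * lam a) by ring,
    mul_le_mul_iff_right₀ h3]

/-- The two-point symmetrization of `K` towards the side of `a`. -/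
def pol (a b : Fsp n) (K : Set (Fsp n)) : Set (Fsp n) :=
  (K ∩ rho a b '' K) ∪ ((K ∪ rho a b '' K) ∩ side a b)

lemma Adm.pol {C : ℝ} {a b : Fsp n} (ha : ‖a‖ < 1) (hb : ‖b‖ < 1) (hab : a ≠ b)
    {K : Set (Fsp n)} (hK : Adm C K) : Adm C (pol a b K) := by
  have hR := hK.image_rho ha hb hab
  have hcross : ∀ x ∈ K ∩ side a b, ∀ y ∈ rho a b '' K ∩ side a b, 0 ≤ F C x y := by
    rintro x ⟨hx, hxs⟩ _ ⟨⟨y, hy, rfl⟩, hys⟩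
    have hx1 := hK.ball x hx
    have hy1 := hK.ball y hy
    have hy2 := norm_rho_lt ha hb hab hy1
    rw [F_nonneg_iff hx1 hy2]
    have h := cd_le_cd_rho ha hb hab hy2 ((mem_side ha hb hx1).1 hxs) ((mem_side ha hb hy2).1 hys)
    rw [rho_rho ha hb hab hy1] at h
    exact h.trans (hK.cd_le hx hy)
  refine ⟨?_, ?_, ?_⟩
  · exact (hK.compact.inter hR.compact).union ((hK.compact.union hR.compact).inter_right
      (isClosed_side a b))
  · rintro x (⟨hx, -⟩ | ⟨hx | hx, -⟩)
    exacts [hK.ball x hx, hK.ball x hx, hR.ball x hx]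
  · rintro x (⟨hx, hx'⟩ | ⟨hx | hx, hxs⟩) y (⟨hy, hy'⟩ | ⟨hy | hy, hys⟩)
    · exact hK.diam x hx y hy
    · exact hK.diam x hx y hy
    · exact hR.diam x hx' y hy
    · exact hK.diam x hx y hy
    · exact hK.diam x hx y hy
    · exact hcross x ⟨hx, hxs⟩ y ⟨hy, hys⟩
    · exact hR.diam x hx y hy'
    · rw [F_comm]; exact hcross y ⟨hy, hys⟩ x ⟨hx, hxs⟩
    · exact hR.diam x hx y hy

lemma hypVol_le_pol {C : ℝ} {a b : Fsp n} (ha : ‖a‖ < 1) (hb : ‖b‖ < 1) (hab : a ≠ b)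
    {K : Set (Fsp n)} (hK : Adm C K) : hypVol n K ≤ hypVol n (pol a b K) := by
  have hR := hK.image_rho ha hb hab
  have mK := hK.compact.measurableSet
  have mR := hR.compact.measurableSet
  have mS := (isClosed_side a b).measurableSet
  -- `A` stays, `B` is the part that polarization moves across the mirror.
  set A := K \ ((K \ rho a b '' K) \ side a b) with hA
  set B := (K \ rho a b '' K) \ side a b with hB
  have mB : MeasurableSet B := (mK.diff mR).diff mS
  have hBK : B ⊆ K := fun x hx => hx.1.1
  have hB1 : ∀ x ∈ B, ‖x‖ < 1 := fun x hx => hK.ball x (hBK hx)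
  have mRB := measurableSet_image_rho ha hb hab mB hB1
  have hdisj : Disjoint A (rho a b '' B) := by
    rw [Set.disjoint_left]
    rintro _ ⟨hx, -⟩ ⟨y, hy, rfl⟩
    refine hy.1.2 ⟨_, hx, rho_rho ha hb hab (hB1 y hy)⟩
  have hsub : A ∪ rho a b '' B ⊆ HypIso.pol a b K := by
    rintro x (⟨hx, hx'⟩ | ⟨y, hy, rfl⟩)
    · by_cases h1 : x ∈ side a b
      · exact Or.inr ⟨Or.inl hx, h1⟩
      · refine Or.inl ⟨hx, ?_⟩
        by_contra h2
        exact hx' ⟨⟨hx, h2⟩, h1⟩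
    · refine Or.inr ⟨Or.inr ⟨y, hBK hy, rfl⟩, ?_⟩
      have hy1 := hB1 y hy
      rw [mem_side ha hb (norm_rho_lt ha hb hab hy1), cd_rho_left_a ha hb hab hy1,
        cd_rho_left_b ha hb hab hy1]
      have := hy.2
      rw [mem_side ha hb hy1, not_le] at this
      exact this.le
  calc hypVol n K = hypVol n (A ∪ B) := by rw [Set.sdiff_union_of_subset hBK]
    _ ≤ hypVol n A + hypVol n B := measure_union_le _ _
    _ = hypVol n A + hypVol n (rho a b '' B) := by rw [hypVol_image_rho ha hb hab mB hB1]
    _ = hypVol n (A ∪ rho a b '' B) := (measure_union hdisj mRB).symm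
    _ ≤ hypVol n (HypIso.pol a b K) := measure_mono hsub

lemma Ext.pol {C : ℝ} {a b : Fsp n} (ha : ‖a‖ < 1) (hb : ‖b‖ < 1) (hab : a ≠ b)
    {K : Set (Fsp n)} (hK : Ext C K) : Ext C (pol a b K) :=
  hK.of_le (hK.adm.pol ha hb hab) (hypVol_le_pol ha hb hab hK.adm)

open Filter Topology

/-! ### Opposite points -/

/-- Every boundary point of an extremal set has an opposite point, at maximal distance: otherwise
completeness would put a neighbourhood of it into the set. -/
lemma Ext.exists_opp {C : ℝ} (hC : 1 ≤ C) {K : Set (Fsp n)} (hK : Ext C K) {x : Fsp n}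
    (hx : x ∈ frontier K) : ∃ u ∈ K, F C x u = 0 := by
  have hxK : x ∈ K := hK.adm.compact.isClosed.frontier_subset hx
  by_contra! hne
  have hpos : ∀ u ∈ K, 0 < F C x u := fun u hu =>
    lt_of_le_of_ne (hK.adm.diam x hxK u hu) (hne u hu).symm
  have h1 : ∀ᶠ y in 𝓝 x, ∀ u ∈ K, 0 < F C y u := by
    apply hK.adm.compact.eventually_forall_of_forall_eventually
    intro u hu
    exact (continuous_F C).continuousAt.eventually (lt_mem_nhds (hpos u hu))
  have h2 : ∀ᶠ y in 𝓝 x, ‖y‖ < 1 :=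
    continuous_norm.continuousAt.eventually (gt_mem_nhds (hK.adm.ball x hxK))
  have h3 : x ∈ interior K := by
    rw [mem_interior_iff_mem_nhds]
    filter_upwards [h1, h2] with y hy1 hy2
    exact hK.complete hC hy2 fun k hk => (hy1 k hk).le
  exact hx.2 h3

/-- Existence of opposite points for the polarized set, expressed in terms of the original set. -/
lemma Ext.pol_opp {C : ℝ} (hC : 1 ≤ C) {K : Set (Fsp n)} (hK : Ext C K) {a b x : Fsp n}
    (ha : ‖a‖ < 1) (hb : ‖b‖ < 1) (hab : a ≠ b) (hx : x ∈ frontier K)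
    (hxs : cd x a < cd x b) (hxr : rho a b x ∉ K) :
    ∃ u ∈ K, F C x u = 0 ∧ (rho a b u ∈ K ∨ cd u a ≤ cd u b) := by
  have hxK : x ∈ K := hK.adm.compact.isClosed.frontier_subset hx
  have hx1 := hK.adm.ball x hxK
  have hP := hK.pol ha hb hab
  have hR := hK.adm.image_rho ha hb hab
  have hxnR : x ∉ rho a b '' K := by
    rintro ⟨y, hy, rfl⟩
    exact hxr (by rwa [rho_rho ha hb hab (hK.adm.ball y hy)])
  have hxP : x ∈ frontier (HypIso.pol a b K) := by
    refine ⟨subset_closure (Or.inr ⟨Or.inl hxK, (mem_side ha hb hx1).2 hxs.le⟩), fun hi => hx.2 ?_⟩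
    rw [mem_interior_iff_mem_nhds] at hi ⊢
    filter_upwards [hi, hR.compact.isClosed.isOpen_compl.mem_nhds hxnR] with y hy hyR
    rcases hy with ⟨h, -⟩ | ⟨h | h, -⟩
    exacts [h, h, absurd h hyR]
  obtain ⟨u, hu, hxu⟩ := hP.exists_opp hC hxP
  have hu1 := hP.adm.ball u hu
  rcases hu with ⟨h, v, hv, rfl⟩ | ⟨h | ⟨v, hv, rfl⟩, hs⟩
  · exact ⟨_, h, hxu, Or.inl (by rwa [rho_rho ha hb hab (hK.adm.ball v hv)])⟩
  · exact ⟨u, h, hxu, Or.inr ((mem_side ha hb hu1).1 hs)⟩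
  · have hv1 := hK.adm.ball v hv
    have hside := (mem_side ha hb hu1).1 hs
    rcases hside.lt_or_eq with hlt | heq
    · have h := cd_lt_cd_rho ha hb hab hu1 hxs hlt
      rw [rho_rho ha hb hab hv1, (F_eq_zero_iff hx1 hu1).1 hxu] at h
      exact absurd (hK.adm.cd_le hxK hv) (not_le.2 h)
    · -- on the mirror the two points coincide
      have h := rho_eq_self hu1 heq
      rw [rho_rho ha hb hab hv1] at h
      rw [← h] at hxu hside
      exact ⟨v, hv, hxu, Or.inr hside⟩

/-- For two boundary points `x`, `p` the reflection exchanging them carries some opposite point of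
`x` to an opposite point of `p`. Otherwise this would fail in a stable way, hence also with `p`
replaced by a nearby point outside of `K`, against the existence of opposite points in the
polarized set. -/
lemma Ext.exists_opp_rho {C : ℝ} (hC : 1 ≤ C) {K : Set (Fsp n)} (hK : Ext C K) {x p : Fsp n}
    (hx : x ∈ frontier K) (hp : p ∈ frontier K) (hxp : x ≠ p) :
    ∃ u ∈ K, F C x u = 0 ∧ rho x p u ∈ K ∧ F C p (rho x p u) = 0 := by
  have hcl := hK.adm.compact.isClosed
  have hxK : x ∈ K := hcl.frontier_subset hx
  have hpK : p ∈ K := hcl.frontier_subset hp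
  have hx1 := hK.adm.ball x hxK
  have hp1 := hK.adm.ball p hpK
  suffices h : ∃ u ∈ K, F C x u = 0 ∧ rho x p u ∈ K by
    obtain ⟨u, hu, h1, h2⟩ := h
    refine ⟨u, hu, h1, h2, ?_⟩
    have hu1 := hK.adm.ball u hu
    rw [F_eq_zero_iff hp1 (hK.adm.ball _ h2), cd_comm, cd_rho_left_b hx1 hp1 hxp hu1, cd_comm]
    exact (F_eq_zero_iff hx1 hu1).1 h1
  by_contra! hne
  have hO : IsCompact {u ∈ K | F C x u = 0} :=
    hK.adm.compact.inter_right (isClosed_eq (continuous_F_right C x) continuous_const)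
  have hev : ∀ᶠ p' in 𝓝 p, ∀ u ∈ {u ∈ K | F C x u = 0},
      rho x p' u ∉ K ∧ cd u p' < cd u x := by
    apply hO.eventually_forall_of_forall_eventually
    rintro u ⟨hu, hxu⟩
    have hu1 := hK.adm.ball u hu
    have h1 := hne u hu hxu
    have hC' : cd u x = C := by rw [cd_comm]; exact (F_eq_zero_iff hx1 hu1).1 hxu
    have h2 : cd u p < cd u x := by
      rw [hC']
      refine lt_of_le_of_ne (hK.adm.cd_le hu hpK) fun h => h1 ?_
      rw [rho_eq_self hu1 (hC'.trans h.symm)]; exact hu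
    refine Filter.Eventually.and ?_ ?_
    · exact (continuousAt_rho hx1 hp1 hxp hu1).eventually (hcl.isOpen_compl.mem_nhds h1)
    · have hc : ContinuousAt (fun z : Fsp n × Fsp n => cd z.2 z.1 - cd z.2 x) (p, u) := by
        refine ContinuousAt.sub ?_ ?_
        · exact ContinuousAt.comp (f := fun z : Fsp n × Fsp n => (z.2, z.1)) (x := (p, u))
            (continuousAt_cd hu1 hp1) (by fun_prop)
        · exact ContinuousAt.comp (f := fun z : Fsp n × Fsp n => (z.2, x)) (x := (p, u))
            (continuousAt_cd hu1 hx1) (by fun_prop)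
      have h3 : cd u p - cd u x < 0 := by linarith
      filter_upwards [hc.eventually (gt_mem_nhds h3)] with z hz
      linarith
  have hev2 : ∀ᶠ p' in 𝓝 p, ‖p'‖ < 1 :=
    continuous_norm.continuousAt.eventually (gt_mem_nhds hp1)
  have hev3 : ∀ᶠ p' in 𝓝 p, p' ≠ x := isOpen_ne.mem_nhds hxp.symm
  have hfr : ∃ᶠ p' in 𝓝 p, p' ∈ Kᶜ := by
    rw [← mem_closure_iff_frequently]
    rw [frontier_eq_closure_inter_closure] at hp
    exact hp.2
  obtain ⟨p', hp'K, h1, h2, h3⟩ := (hfr.and_eventually (hev.and (hev2.and hev3))).exists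
  obtain ⟨u, hu, hxu, h⟩ := hK.pol_opp hC hx1 h2 h3.symm hx
    (by rw [cd_self hx1]; exact one_lt_cd hx1 h2 h3.symm)
    (by rw [rho_left hx1 h2 h3.symm]; exact hp'K)
  obtain ⟨h4, h5⟩ := h1 u ⟨hu, hxu⟩
  rcases h with h | h
  · exact h4 h
  · exact absurd h (not_le.2 h5)

/-! ### Uniqueness of opposite points -/

lemma F_self_pos {C : ℝ} (hC : 1 < C) {x : Fsp n} (hx : ‖x‖ < 1) : 0 < F C x x := by
  have h1 := lam_sq hx.le
  have h2 := lam_pos hx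
  unfold F
  rw [real_inner_self_eq_norm_sq, ← h1]
  nlinarith [pow_pos h2 2]

/-- Points strictly between `q` and a point at distance at most `arcosh C` from `q` are at distance
less than `arcosh C` from `q`. -/
lemma F_pos_of_between {C : ℝ} (hC : 1 < C) {q y : Fsp n} (hq : ‖q‖ < 1) (hy : ‖y‖ < 1)
    (h : 0 ≤ F C q y) {t : ℝ} (ht : 0 ≤ t) (ht1 : t < 1) : 0 < F C q (q + t • (y - q)) := by
  have h1 := (F_concave (by linarith : 0 ≤ C) q).2 (mem_ball_zero_iff.2 hq)
    (mem_ball_zero_iff.2 hy) (sub_nonneg.2 ht1.le) ht (sub_add_cancel 1 t)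
  have h2 : (1 - t) • q + t • y = q + t • (y - q) := by module
  rw [h2] at h1
  simp only [smul_eq_mul] at h1
  have := mul_pos (sub_pos.2 ht1) (F_self_pos hC hq)
  nlinarith [mul_nonneg ht h]

/-- Opposite points lie on the boundary. -/
lemma Adm.mem_frontier_of_opp {C : ℝ} (hC : 1 < C) {K : Set (Fsp n)} (hK : Adm C K) {q u : Fsp n}
    (hq : q ∈ K) (hu : u ∈ K) (h : F C q u = 0) : u ∈ frontier K := by
  refine ⟨subset_closure hu, fun hi => ?_⟩
  have hc : ContinuousAt (fun e : ℝ => u + e • (u - q)) 0 := by fun_prop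
  have h0 : K ∈ 𝓝 (u + (0 : ℝ) • (u - q)) := by
    rw [zero_smul, add_zero]; exact mem_interior_iff_mem_nhds.1 hi
  have h1 : ∀ᶠ e : ℝ in 𝓝[>] 0, u + e • (u - q) ∈ K :=
    (hc.eventually h0).filter_mono nhdsWithin_le_nhds
  obtain ⟨e, he, hepos⟩ := (h1.and self_mem_nhdsWithin).exists
  have hepos : 0 < e := hepos
  have h2 := F_pos_of_between hC (hK.ball q hq) (hK.ball _ he) (hK.diam q hq _ he)
    (t := (1 + e)⁻¹) (by positivity) (inv_lt_one_of_one_lt₀ (by linarith))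
  have h3 : q + (1 + e)⁻¹ • (u + e • (u - q) - q) = u := by
    have : u + e • (u - q) - q = (1 + e) • (u - q) := by module
    rw [this, smul_smul, inv_mul_cancel₀ (by positivity), one_smul]; abel
  rw [h3, h] at h2
  exact lt_irrefl _ h2

lemma exists_frontier_mem_segment {K : Set (Fsp n)} (hK : IsClosed K) {y z : Fsp n} (hy : y ∈ K)
    (hz : z ∉ K) : ∃ r ∈ segment ℝ y z, r ∈ frontier K := by
  by_contra! hne
  have hpre : IsPreconnected (segment ℝ y z) := (convex_segment y z).isPreconnected
  have hsub : segment ℝ y z ⊆ interior K ∪ Kᶜ := by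
    intro r hr
    by_cases hrK : r ∈ K
    · left
      by_contra hri
      exact hne r hr ⟨subset_closure hrK, hri⟩
    · exact Or.inr hrK
  have hyi : y ∈ interior K := by
    rcases hsub (left_mem_segment ℝ y z) with h | h
    exacts [h, absurd hy h]
  obtain ⟨r, -, hr1, hr2⟩ := hpre _ _ isOpen_interior hK.isOpen_compl hsub
    ⟨y, left_mem_segment ℝ y z, hyi⟩ ⟨z, right_mem_segment ℝ y z, hz⟩
  exact hr2 (interior_subset hr1)

/-- The gradient of `F C y` at `r`. -/
def gr (C : ℝ) (y r : Fsp n) : Fsp n := y - (C * lam y / lam r) • r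

lemma continuousAt_gr (C : ℝ) {r : Fsp n} (hr : ‖r‖ < 1) (y : Fsp n) :
    ContinuousAt (fun z : Fsp n × Fsp n => gr C z.1 z.2) (y, r) := by
  have h1 : ContinuousAt (fun z : Fsp n × Fsp n => lam z.1) (y, r) :=
    (continuous_lam.comp continuous_fst).continuousAt
  have h2 : ContinuousAt (fun z : Fsp n × Fsp n => lam z.2) (y, r) :=
    (continuous_lam.comp continuous_snd).continuousAt
  unfold gr
  exact continuousAt_fst.sub (((continuousAt_const.mul h1).div h2 (lam_pos hr).ne').smul
    continuousAt_snd)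

/-- The tangent inequality for the concave function `F C y`. -/
lemma F_le_tangent {C : ℝ} (hC : 0 ≤ C) {y z r : Fsp n} (hz : ‖z‖ < 1)
    (hr : ‖r‖ < 1) : F C y z ≤ F C y r + inner ℝ (gr C y r) (z - r) := by
  have h1 := rcs hr.le hz.le
  have h2 := lam_pos hr
  have h3 := lam_sq hr.le
  have h4 : lam z ≤ lam r - (inner ℝ r z - ‖r‖ ^ 2) / lam r := by
    rw [le_sub_iff_add_le, ← le_sub_iff_add_le', div_le_iff₀ h2]
    nlinarith
  have h5 := mul_le_mul_of_nonneg_left h4 (mul_nonneg hC (lam_nonneg y))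
  have h6 : inner ℝ (gr C y r) (z - r) = inner ℝ y z - inner ℝ y r
      - C * lam y * ((inner ℝ r z - ‖r‖ ^ 2) / lam r) := by
    simp only [gr, inner_sub_left, inner_sub_right, real_inner_smul_left,
      real_inner_self_eq_norm_sq]
    ring
  rw [h6]
  unfold F
  nlinarith

/-- For opposite points the gradient is the image of `y - q` under a fixed positive definite map. -/
lemma gr_eq {C : ℝ} {q y : Fsp n} (hq : ‖q‖ < 1) (h : F C q y = 0) :
    gr C y q = (y - q) + (inner ℝ q (y - q) / (1 - ‖q‖ ^ 2)) • q := by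
  have h1 := lam_pos hq
  have h2 := lam_sq hq.le
  have h3 := one_sub_sq_pos hq
  have h4 : C * lam y / lam q = 1 - inner ℝ q (y - q) / (1 - ‖q‖ ^ 2) := by
    rw [← h2, inner_sub_right, real_inner_self_eq_norm_sq]
    unfold F at h
    field_simp
    linear_combination h - h2
  rw [gr, h4]
  module

/-- Two distinct points opposite to `q` have gradients at `q` pointing in different directions. -/
lemma gr_not_sameRay {C : ℝ} (hC : 1 < C) {q y z : Fsp n} (hq : ‖q‖ < 1) (hy : ‖y‖ < 1)
    (hz : ‖z‖ < 1) (hqy : F C q y = 0) (hqz : F C q z = 0) {b c : ℝ} (hb : 0 < b) (hc : 0 < c)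
    (h : b • gr C y q = c • gr C z q) : y = z := by
  have h3 := one_sub_sq_pos hq
  -- the positive definite map relating `y - q` to the gradient is injective
  have hd : b • (y - q) = c • (z - q) := by
    rw [gr_eq hq hqy, gr_eq hq hqz] at h
    set d := b • (y - q) - c • (z - q) with hd
    have h4 : d + (inner ℝ q d / (1 - ‖q‖ ^ 2)) • q = 0 := by
      rw [hd, inner_sub_right, real_inner_smul_right, real_inner_smul_right]
      rw [← sub_eq_zero] at h
      rw [← h]
      module
    have h5 : inner ℝ q d + (inner ℝ q d / (1 - ‖q‖ ^ 2)) * ‖q‖ ^ 2 = 0 := by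
      have := congrArg (fun v => inner ℝ q v) h4
      simpa only [inner_add_right, real_inner_smul_right, real_inner_self_eq_norm_sq,
        inner_zero_right] using this
    have h6 : inner ℝ q d = 0 := by
      field_simp at h5
      linarith
    rw [h6, zero_div, zero_smul, add_zero, hd, sub_eq_zero] at h4
    exact h4
  have key : ∀ {b c : ℝ} {y z : Fsp n}, ‖y‖ < 1 → F C q y = 0 → F C q z = 0 → 0 < b → 0 < c →
      b • (y - q) = c • (z - q) → ¬ b < c := by
    intro b c y z hy hqy hqz hb hc hd hbc
    have h1 := F_pos_of_between hC hq hy hqy.ge (t := b / c) (by positivity)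
      ((div_lt_one hc).2 hbc)
    have h2 : q + (b / c) • (y - q) = z := by
      rw [div_eq_inv_mul, mul_smul, hd, smul_smul, inv_mul_cancel₀ hc.ne', one_smul]; abel
    rw [h2, hqz] at h1
    exact lt_irrefl _ h1
  have hbc : b = c :=
    le_antisymm (not_lt.1 (key hz hqz hqy hc hb hd.symm)) (not_lt.1 (key hy hqy hqz hb hc hd))
  rw [hbc] at hd
  have := smul_right_injective (Fsp n) hc.ne' hd
  exact sub_left_injective this

/-- If opposite points can be chosen continuously near the boundary point `q`, then the opposite
point of `q` is unique. If `x` were another one, there would be a direction `v` leaving `K`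
because of `x` while approaching `s q`; a boundary point `r` near `q` between this direction and an
interior one would be too close to `s q`, and its opposite point `s r` too far from `q`. -/
lemma Ext.opp_unique {C : ℝ} (hC : 1 < C) {K : Set (Fsp n)} (hK : Ext C K) {q x : Fsp n}
    {s : Fsp n → Fsp n} (hq : q ∈ frontier K) (hs : ContinuousAt s q)
    (hsO : ∀ᶠ r in 𝓝 q, r ∈ frontier K → s r ∈ K ∧ F C r (s r) = 0)
    (hx : x ∈ K) (hqx : F C q x = 0) : x = s q := by
  have hC0 : 0 ≤ C := by linarith
  have hcl := hK.adm.compact.isClosed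
  have hqK : q ∈ K := hcl.frontier_subset hq
  have hq1 := hK.adm.ball q hqK
  obtain ⟨hp, hqp⟩ := hsO.self_of_nhds hq
  set p := s q with hpdef
  have hp1 := hK.adm.ball p hp
  have hx1 := hK.adm.ball x hx
  by_contra hxp
  obtain ⟨o, ho⟩ := (hK.hull_eq hC.le).2
  have hoK : o ∈ K := interior_subset ho
  have hgo : ∀ y ∈ K, F C q y = 0 → 0 < inner ℝ (gr C y q) (o - q) := by
    intro y hy hqy
    have h1 := F_le_tangent hC0 (y := y) (hK.adm.ball o hoK) hq1
    have h2 : 0 < F C y o := by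
      refine lt_of_le_of_ne (hK.adm.diam y hy o hoK) fun h => ?_
      exact (hK.adm.mem_frontier_of_opp hC hy hoK h.symm).2 ho
    rw [F_comm C y q, hqy] at h1
    linarith
  have hne : ∀ y ∈ K, F C q y = 0 → 0 < ‖gr C y q‖ := by
    intro y hy hqy
    rw [norm_pos_iff]
    intro h0
    have := hgo y hy hqy
    rw [h0, inner_zero_left] at this
    exact lt_irrefl _ this
  have hnp := hne p hp hqp
  have hnx := hne x hx hqx
  have hcs : inner ℝ (gr C p q) (gr C x q) < ‖gr C p q‖ * ‖gr C x q‖ := by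
    rw [inner_lt_norm_mul_iff_real]
    intro h
    exact hxp (gr_not_sameRay hC hq1 hp1 hx1 hqp hqx hnx hnp h).symm
  set v := ‖gr C x q‖ • gr C p q - ‖gr C p q‖ • gr C x q with hv
  have hvp : 0 < inner ℝ (gr C p q) v := by
    rw [hv, inner_sub_right, real_inner_smul_right, real_inner_smul_right,
      real_inner_self_eq_norm_sq]
    nlinarith [mul_pos hnp (sub_pos.2 hcs)]
  have hvx : inner ℝ (gr C x q) v < 0 := by
    rw [hv, inner_sub_right, real_inner_smul_right, real_inner_smul_right,
      real_inner_self_eq_norm_sq, real_inner_comm]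
    nlinarith [mul_pos hnx (sub_pos.2 hcs)]
  set w := o - q with hw
  have hwp : 0 < inner ℝ (gr C p q) w := hgo p hp hqp
  have hgc : ContinuousAt (fun r => gr C (s r) r) q :=
    ContinuousAt.comp (f := fun r => (s r, r)) (g := fun z : Fsp n × Fsp n => gr C z.1 z.2)
      (x := q) (continuousAt_gr C hq1 (s q)) (hs.prodMk continuousAt_id)
  have hev : ∀ e : Fsp n, 0 < inner ℝ (gr C p q) e →
      ∀ᶠ r in 𝓝 q, 0 < inner ℝ (gr C (s r) r) e := fun e he =>
    (hgc.inner (𝕜 := ℝ) continuousAt_const).eventually (lt_mem_nhds he)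
  have hall := hsO.and ((hev v hvp).and (hev w hwp))
  obtain ⟨ε, hε, hball⟩ := Metric.eventually_nhds_iff_ball.1 hall
  have hq1' : ∀ᶠ t : ℝ in 𝓝[>] 0, ‖q + t • v‖ < 1 := by
    have hc : ContinuousAt (fun t : ℝ => ‖q + t • v‖) 0 := by fun_prop
    exact (hc.eventually (gt_mem_nhds (by simpa using hq1))).filter_mono nhdsWithin_le_nhds
  have hvt : ∀ e : Fsp n, ∀ᶠ t : ℝ in 𝓝[>] 0, q + t • e ∈ Metric.ball q ε := by
    intro e
    have hc : ContinuousAt (fun t : ℝ => q + t • e) 0 := by fun_prop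
    refine (hc.eventually ?_).filter_mono nhdsWithin_le_nhds
    simp only [zero_smul, add_zero]
    exact Metric.ball_mem_nhds q hε
  have ht1 : ∀ᶠ t : ℝ in 𝓝[>] 0, t < 1 :=
    (gt_mem_nhds (zero_lt_one' ℝ)).filter_mono nhdsWithin_le_nhds
  obtain ⟨t, ⟨h1, hbv, hbw, ht1⟩, ht⟩ :=
    ((hq1'.and ((hvt v).and ((hvt w).and ht1))).and self_mem_nhdsWithin).exists
  have ht : 0 < t := ht
  have hout : q + t • v ∉ K := by
    intro hin
    have h2 := F_le_tangent hC0 (y := x) h1 hq1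
    rw [F_comm C x q, hqx, add_sub_cancel_left, real_inner_smul_right] at h2
    nlinarith [hK.adm.diam x hx _ hin]
  have hin : q + t • w ∈ K := by
    have := (hK.convex hC.le) hqK hoK (sub_nonneg.2 ht1.le) ht.le (sub_add_cancel 1 t)
    rwa [show (1 - t) • q + t • o = q + t • w by rw [hw]; module] at this
  obtain ⟨r, hr, hrf⟩ := exists_frontier_mem_segment hcl hin hout
  have hrb : r ∈ Metric.ball q ε := (convex_ball q ε).segment_subset hbw hbv hr
  obtain ⟨hr1, hr2, hr3⟩ := hball r hrb
  obtain ⟨hsr, hFr⟩ := hr1 hrf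
  obtain ⟨a, b, ha, hb, hab, rfl⟩ := hr
  set r := a • (q + t • w) + b • (q + t • v) with hrdef
  have hrq : q - r = -(t • (a • w + b • v)) := by
    have : q = (a + b) • q := by rw [hab, one_smul]
    rw [hrdef]
    nth_rewrite 1 [this]
    module
  have h4 := F_le_tangent hC0 (y := s r) hq1 (hK.adm.ball r (hcl.frontier_subset hrf))
  rw [F_comm C (s r) r, hFr, hrq, inner_neg_right, real_inner_smul_right, inner_add_right,
    real_inner_smul_right, real_inner_smul_right] at h4
  have h5 := hK.adm.diam _ hsr q hqK
  have h6 : 0 < a * inner ℝ (gr C (s r) r) w + b * inner ℝ (gr C (s r) r) v := by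
    rcases ha.lt_or_eq with h | h
    · nlinarith [mul_pos h hr3, mul_nonneg hb hr2.le]
    · have : b = 1 := by linarith
      rw [← h, this]; linarith
  nlinarith [mul_pos ht h6]

/-- If the origin is interior, the boundary point closest to it has a unique opposite point. -/
lemma Ext.exists_unique_opp (hn : 0 < n) {C : ℝ} (hC : 1 < C) {K : Set (Fsp n)} (hK : Ext C K)
    (h0 : (0 : Fsp n) ∈ interior K) :
    ∃ p ∈ frontier K, ∃ q ∈ K, F C p q = 0 ∧ ∀ u ∈ K, F C p u = 0 → u = q := by
  have hcl := hK.adm.compact.isClosed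
  have hfc : IsCompact (frontier K) :=
    hK.adm.compact.of_isClosed_subset isClosed_frontier hcl.frontier_subset
  have h0K : (0 : Fsp n) ∈ K := interior_subset h0
  have hfne : (frontier K).Nonempty := by
    by_contra hne
    rw [Set.not_nonempty_iff_eq_empty, frontier_eq_empty_iff] at hne
    rcases hne with rfl | rfl
    · exact h0K
    · have h1 := hK.adm.ball (EuclideanSpace.single ⟨0, hn⟩ (1 : ℝ)) (Set.mem_univ _)
      simp at h1
  obtain ⟨p, hp, hmin⟩ := hfc.exists_isMinOn hfne continuous_norm.continuousOn
  have hpK := hcl.frontier_subset hp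
  have hp1 := hK.adm.ball p hpK
  have hpn : 0 < ‖p‖ := by
    rw [norm_pos_iff]
    rintro rfl
    exact hp.2 h0
  have hball : ∀ v : Fsp n, ‖v‖ ≤ ‖p‖ → v ∈ K := by
    intro v hv
    by_contra hvK
    obtain ⟨r, ⟨a, b, ha, hb, hab, rfl⟩, hr⟩ := exists_frontier_mem_segment hcl h0K hvK
    have h1 : ‖p‖ ≤ ‖a • (0 : Fsp n) + b • v‖ := hmin hr
    rw [smul_zero, zero_add] at hr h1
    rw [norm_smul, Real.norm_of_nonneg hb] at h1
    have h2 : b = 1 := by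
      refine le_antisymm (by linarith) ?_
      by_contra hlt
      nlinarith [mul_le_mul_of_nonneg_left hv hb]
    rw [h2, one_smul] at hr
    exact hvK (hcl.frontier_subset hr)
  have hopp : ∀ u ∈ K, F C p u = 0 → inner ℝ p u = -(‖p‖ * ‖u‖) := by
    intro u hu hpu
    rcases eq_or_ne u 0 with rfl | hu0
    · simp
    · have hun : 0 < ‖u‖ := norm_pos_iff.2 hu0
      have hvn : ‖(-(‖p‖ / ‖u‖)) • u‖ = ‖p‖ := by
        rw [norm_smul, Real.norm_eq_abs, abs_neg, abs_of_nonneg (by positivity)]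
        field_simp
      have h1 := hK.adm.diam _ (hball _ hvn.le) u hu
      have h2 : lam ((-(‖p‖ / ‖u‖)) • u) = lam p := by unfold lam; rw [hvn]
      have h3 : inner ℝ ((-(‖p‖ / ‖u‖)) • u) u = -(‖p‖ * ‖u‖) := by
        rw [real_inner_smul_left, real_inner_self_eq_norm_sq]; field_simp
      unfold F at h1 hpu
      rw [h2, h3] at h1
      have h4 := neg_le_of_abs_le (abs_real_inner_le_norm p u)
      linarith
  have hray : ∀ u ∈ K, F C p u = 0 → u = -(‖u‖ / ‖p‖) • p := by
    intro u hu hpu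
    have h1 := hopp u hu hpu
    have h2 : inner ℝ p (-u) = ‖p‖ * ‖-u‖ := by rw [inner_neg_right, norm_neg, h1, neg_neg]
    rw [inner_eq_norm_mul_iff_real, norm_neg] at h2
    have h3 : u = -((‖p‖)⁻¹ • (‖p‖ • (-u))) := by
      rw [smul_smul, inv_mul_cancel₀ hpn.ne', one_smul, neg_neg]
    rw [← h2, smul_smul] at h3
    rw [neg_smul, div_eq_inv_mul]
    exact h3
  have hmono : ∀ u ∈ K, ∀ v ∈ K, F C p u = 0 → F C p v = 0 → ¬ ‖u‖ < ‖v‖ := by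
    intro u hu v hv hpu hpv hlt
    have h1 := hopp u hu hpu
    have h2 := hopp v hv hpv
    have h3 : lam v ≤ lam u := by
      unfold lam
      apply Real.sqrt_le_sqrt
      nlinarith [norm_nonneg u]
    have h4 := mul_le_mul_of_nonneg_left h3
      (mul_nonneg (by linarith : 0 ≤ C) (lam_nonneg p))
    unfold F at hpu hpv
    nlinarith [mul_lt_mul_of_pos_left hlt hpn]
  obtain ⟨q, hq, hpq⟩ := hK.exists_opp hC.le hp
  refine ⟨p, hp, q, hq, hpq, fun u hu hpu => ?_⟩
  have : ‖u‖ = ‖q‖ :=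
    le_antisymm (not_lt.1 (hmono q hq u hu hpq hpu)) (not_lt.1 (hmono u hu q hq hpu hpq))
  rw [hray u hu hpu, hray q hq hpq, this]

/-! ### The common midpoint -/

/-- Three distinct points of the hyperboloid are not collinear. -/
lemma lift_not_collinear {p q r : Fsp n} (hp : ‖p‖ < 1) (hq : ‖q‖ < 1) (hr : ‖r‖ < 1)
    (hpr : p ≠ r) {x : ℝ} (h : lift q = x • lift p + (1 - x) • lift r) : q = p ∨ q = r := by
  have h1 : Q (lift q) (lift q) = 1 := by rw [Q_lift, cd_self hq]
  rw [h] at h1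
  simp only [Q_add_left, Q_add_right, Q_smul_left, Q_smul_right, Q_lift, cd_self hp, cd_self hr,
    cd_comm r p] at h1
  have h2 := one_lt_cd hp hr hpr
  have h3 : x * ((1 - x) * (cd p r - 1)) = 0 := by linarith
  rcases mul_eq_zero.1 h3 with h4 | h4
  · right
    apply lift_injective hq hr
    rw [h, h4, zero_smul, sub_zero, one_smul, zero_add]
  · rcases mul_eq_zero.1 h4 with h5 | h5
    · left
      apply lift_injective hq hp
      have : x = 1 := by linarith
      rw [h, this, one_smul, sub_self, zero_smul, add_zero]
    · linarith

/-- The reflections exchanging `p` with `r` and `q` with `r` agree on the other of the two points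
only if the geodesic segment from `r` to the common image has the same midpoint as the one from `p`
to `q`. -/
lemma lift_add_eq {p q r : Fsp n} (hp : ‖p‖ < 1) (hq : ‖q‖ < 1) (hr : ‖r‖ < 1)
    (hpq : p ≠ q) (hpr : p ≠ r) (hqr : q ≠ r) (h : rho p r q = rho q r p) :
    lift r + lift (rho p r q) = lift p + lift q := by
  have h1 := lift_rho hp hr hpr hq
  have h2 := lift_rho hq hr hqr hp
  rw [refl_apply] at h1 h2
  rw [← h, h1] at h2
  rw [h1]
  set α := 2 * Q (lift q) (lift p - lift r) / Q (lift p - lift r) (lift p - lift r)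
  set β := 2 * Q (lift p) (lift q - lift r) / Q (lift q - lift r) (lift q - lift r)
  have h3 : (1 + β) • lift q = (1 + α) • lift p + (β - α) • lift r := by
    rw [← sub_eq_zero] at h2 ⊢
    rw [← h2]; module
  have hα : 1 + α = 0 := by
    by_cases hβ : 1 + β = 0
    · by_contra hα
      have hβ' : β = -1 := by linarith
      have h4 : (1 + α) • (lift p - lift r) = 0 := by
        rw [hβ, zero_smul, hβ'] at h3
        rw [h3]; module
      rcases smul_eq_zero.1 h4 with h5 | h5
      · exact hα h5
      · exact hpr (lift_injective hp hr (sub_eq_zero.1 h5))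
    · exfalso
      have h4 : lift q = ((1 + α) / (1 + β)) • lift p + (1 - (1 + α) / (1 + β)) • lift r := by
        have h5 : 1 - (1 + α) / (1 + β) = (1 + β)⁻¹ * (β - α) := by field_simp; ring
        rw [h5, div_eq_inv_mul, mul_smul, mul_smul, ← smul_add, ← h3, smul_smul,
          inv_mul_cancel₀ hβ, one_smul]
      rcases lift_not_collinear hp hq hr hpr h4 with h5 | h5
      exacts [hpq h5.symm, hqr h5]
  have hα' : α = -1 := by linarith
  rw [hα']; module

lemma cosh_half (D : ℝ) : Real.cosh D = 2 * Real.cosh (D / 2) ^ 2 - 1 := by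
  have := Real.cosh_two_mul (D / 2)
  rw [mul_div_cancel₀ D two_ne_zero, Real.sinh_sq] at this
  linarith

/-- All boundary points of an extremal set with the origin in its interior have the same distance
from some point. -/
lemma Ext.exists_center (hn : 0 < n) {D : ℝ} (hD : 0 < D) {K : Set (Fsp n)}
    (hK : Ext (Real.cosh D) K) (h0 : (0 : Fsp n) ∈ interior K) :
    ∃ m : Fsp n, ‖m‖ < 1 ∧ ∀ r ∈ frontier K, cd r m = Real.cosh (D / 2) := by
  have hC : 1 < Real.cosh D := Real.one_lt_cosh.2 hD.ne'
  have hCD := cosh_half D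
  set C := Real.cosh D with hCdef
  have hcl := hK.adm.compact.isClosed
  have hK1 : ∀ r ∈ frontier K, ‖r‖ < 1 := fun r hr => hK.adm.ball r (hcl.frontier_subset hr)
  obtain ⟨p, hp, q, hqK, hpq, huniq⟩ := hK.exists_unique_opp hn hC h0
  have hpK := hcl.frontier_subset hp
  have hp1 := hK1 p hp
  have hq : q ∈ frontier K := hK.adm.mem_frontier_of_opp hC hpK hqK hpq
  have hq1 := hK1 q hq
  have hne : p ≠ q := by
    rintro rfl
    exact (F_self_pos hC hp1).ne' hpq
  have hopp : ∀ r ∈ frontier K, r ≠ p → rho p r q ∈ K ∧ F C r (rho p r q) = 0 := by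
    intro r hr hrp
    obtain ⟨u, hu, h1, h2, h3⟩ := hK.exists_opp_rho hC.le hp hr hrp.symm
    rw [huniq u hu h1] at h2 h3
    exact ⟨h2, h3⟩
  have huniq2 : ∀ r ∈ frontier K, r ≠ p → ∀ x ∈ K, F C r x = 0 → x = rho p r q := by
    intro r hr hrp x hx hrx
    refine hK.opp_unique hC (s := fun r => rho p r q) hr ?_ ?_ hx hrx
    · exact ContinuousAt.comp (f := fun r : Fsp n => (r, q)) (x := r)
        (continuousAt_rho hp1 (hK1 r hr) hrp.symm hq1) (by fun_prop)
    · have hev : ∀ᶠ r' in 𝓝 r, r' ≠ p := isOpen_ne.mem_nhds hrp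
      filter_upwards [hev] with r' h1 h2
      exact hopp r' h2 h1
  set W := lift p + lift q with hW
  have hWr : ∀ r ∈ frontier K, Q (lift r) W = 1 + C := by
    intro r hr
    have hr1 := hK1 r hr
    have hcpq : cd p q = C := (F_eq_zero_iff hp1 hq1).1 hpq
    by_cases hrp : r = p
    · rw [hrp, hW, Q_add_right, Q_lift, Q_lift, cd_self hp1, hcpq]
    by_cases hrq : r = q
    · rw [hrq, hW, Q_add_right, Q_lift, Q_lift, cd_self hq1, cd_comm, hcpq, add_comm]
    obtain ⟨hs, hrs⟩ := hopp r hr hrp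
    obtain ⟨u, hu, h1, h2, h3⟩ := hK.exists_opp_rho hC.le hq hr (Ne.symm hrq)
    have hup : u = p := by
      rw [huniq2 q hq hne.symm u hu h1, rho_right hp1 hq1 hne]
    rw [hup] at h2 h3
    have h4 := huniq2 r hr hrp _ h2 h3
    rw [hW, ← lift_add_eq hp1 hq1 hr1 hne (Ne.symm hrp) (Ne.symm hrq) h4.symm, Q_add_right, Q_lift,
      Q_lift, cd_self hr1, (F_eq_zero_iff hr1 (hK.adm.ball _ hs)).1 hrs]
  have hc := Real.cosh_pos (D / 2)
  have hWW : Q W W = (2 * Real.cosh (D / 2)) ^ 2 := by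
    have h1 := hWr p hp
    have h2 := hWr q hq
    conv_lhs => rw [hW, Q_add_left, ← hW]
    rw [h1, h2, hCD]; ring
  have hW1 : 0 < W.1 := add_pos (lift_fst_pos hp1) (lift_fst_pos hq1)
  have hWp : 0 < Q W W := by rw [hWW]; positivity
  refine ⟨proj W, norm_proj_lt hW1 hWp, fun r hr => ?_⟩
  rw [← Q_lift, lift_proj hW1 hWp, Q_smul_right, hWr r hr, hWW, Real.sqrt_sq (by positivity), hCD]
  field_simp
  ring

/-! ### Hyperbolic balls -/

/-- The hyperbolic closed ball with center `m`, for which `c` is the hyperbolic cosine of the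
radius. -/
def hb (c : ℝ) (m : Fsp n) : Set (Fsp n) := {y | ‖y‖ < 1 ∧ cd y m ≤ c}

lemma image_rho_hb {a b m : Fsp n} (ha : ‖a‖ < 1) (hb1 : ‖b‖ < 1) (hab : a ≠ b) (hm : ‖m‖ < 1)
    (c : ℝ) : rho a b '' hb c m = hb c (rho a b m) := by
  ext y
  constructor
  · rintro ⟨x, ⟨hx, hxm⟩, rfl⟩
    exact ⟨norm_rho_lt ha hb1 hab hx, by rwa [cd_rho ha hb1 hab hx hm]⟩
  · rintro ⟨hy, hym⟩
    have h := norm_rho_lt ha hb1 hab hy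
    refine ⟨rho a b y, ⟨h, ?_⟩, rho_rho ha hb1 hab hy⟩
    rwa [← cd_rho ha hb1 hab h hm, rho_rho ha hb1 hab hy]

lemma cd_zero_right (y : Fsp n) : cd y 0 = (lam y)⁻¹ := by
  simp [cd, lam]

/-- The triangle inequality through the midpoint of a ball centered at the origin. -/
lemma cd_le_of_mem_hb_zero {D : ℝ} {y z : Fsp n} (hy : y ∈ hb (Real.cosh (D / 2)) 0)
    (hz : z ∈ hb (Real.cosh (D / 2)) 0) : cd y z ≤ Real.cosh D := by
  have key : ∀ y ∈ hb (Real.cosh (D / 2)) (0 : Fsp n),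
      ‖y‖ < 1 ∧ 1 ≤ Real.cosh (D / 2) * lam y := by
    rintro y ⟨hy, h⟩
    rw [cd_zero_right, inv_le_iff_one_le_mul₀ (lam_pos hy)] at h
    exact ⟨hy, h⟩
  obtain ⟨hy1, hy2⟩ := key y hy
  obtain ⟨hz1, hz2⟩ := key z hz
  have hc := Real.one_le_cosh (D / 2)
  have h1 := lam_pos hy1
  have h2 := lam_pos hz1
  have h3 := lam_sq hy1.le
  have h4 := lam_sq hz1.le
  rw [← F_nonneg_iff hy1 hz1, cosh_half]
  unfold F
  have h5 := neg_le_of_abs_le (abs_real_inner_le_norm y z)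
  set c := Real.cosh (D / 2)
  have h6 : 1 ≤ c ^ 2 * (lam y * lam z) := by
    have := one_le_mul_of_one_le_of_one_le hy2 hz2
    nlinarith
  -- `‖y‖² = 1 - lam y²`, so that `‖y‖ ‖z‖ + lam y * lam z ≤ 1`
  have h7 : ‖y‖ * ‖z‖ + lam y * lam z ≤ 1 := by
    nlinarith [sq_nonneg (‖y‖ - ‖z‖), sq_nonneg (lam y - lam z)]
  nlinarith

lemma cd_le_of_mem_hb {D : ℝ} {m y z : Fsp n} (hm : ‖m‖ < 1) (hy : y ∈ hb (Real.cosh (D / 2)) m)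
    (hz : z ∈ hb (Real.cosh (D / 2)) m) : cd y z ≤ Real.cosh D := by
  rcases eq_or_ne m 0 with rfl | hm0
  · exact cd_le_of_mem_hb_zero hy hz
  have h01 : ‖(0 : Fsp n)‖ < 1 := by simp
  have h := image_rho_hb hm h01 hm0 hm (Real.cosh (D / 2))
  rw [rho_left hm h01 hm0] at h
  rw [← cd_rho hm h01 hm0 hy.1 hz.1]
  exact cd_le_of_mem_hb_zero (h ▸ Set.mem_image_of_mem _ hy) (h ▸ Set.mem_image_of_mem _ hz)

lemma Ext.eq_hb_of_zero_mem (hn : 0 < n) {D : ℝ} (hD : 0 < D) {K : Set (Fsp n)}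
    (hK : Ext (Real.cosh D) K) (h0 : (0 : Fsp n) ∈ interior K) :
    ∃ m : Fsp n, ‖m‖ < 1 ∧ K = hb (Real.cosh (D / 2)) m := by
  have hC : 1 < Real.cosh D := Real.one_lt_cosh.2 hD.ne'
  have hcl := hK.adm.compact.isClosed
  obtain ⟨m, hm, hfr⟩ := hK.exists_center hn hD h0
  refine ⟨m, hm, ?_⟩
  set c := Real.cosh (D / 2) with hc
  have hc1 : 1 ≤ c := Real.one_le_cosh _
  have hsub : K ⊆ hb c m := by
    intro k hk
    have hk1 := hK.adm.ball k hk
    refine ⟨hk1, ?_⟩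
    rcases eq_or_ne k m with rfl | hkm
    · rw [cd_self hm]; exact hc1
    -- leave `K` along the ray from `m` through `k`
    have hd : 0 < ‖k - m‖ := norm_pos_iff.2 (sub_ne_zero.2 hkm)
    have hz : k + (2 / ‖k - m‖) • (k - m) ∉ K := by
      intro hz
      have h1 := hK.adm.ball _ hz
      have h2 : ‖(2 / ‖k - m‖) • (k - m)‖ = 2 := by
        rw [norm_smul, Real.norm_of_nonneg (by positivity)]; field_simp
      have h3 := norm_sub_le (k + (2 / ‖k - m‖) • (k - m)) k
      rw [add_sub_cancel_left, h2] at h3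
      linarith
    obtain ⟨r, ⟨a, b, ha, hb, hab, rfl⟩, hr⟩ := exists_frontier_mem_segment hcl hk hz
    set r := a • k + b • (k + (2 / ‖k - m‖) • (k - m)) with hrdef
    have hr1 := hK.adm.ball r (hcl.frontier_subset hr)
    set t := b * (2 / ‖k - m‖) with ht
    have ht0 : 0 ≤ t := by positivity
    have hrk : r = k + t • (k - m) := by
      have : a = 1 - b := by linarith
      rw [hrdef, this, ht]; module
    have h1 := (F_concave (by linarith : 0 ≤ c) m).convex_ge 0
    have h2 : m ∈ {y ∈ Metric.ball (0 : Fsp n) 1 | 0 ≤ F c m y} :=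
      ⟨mem_ball_zero_iff.2 hm, F_self_nonneg hc1 hm⟩
    have h3 : r ∈ {y ∈ Metric.ball (0 : Fsp n) 1 | 0 ≤ F c m y} := by
      refine ⟨mem_ball_zero_iff.2 hr1, ?_⟩
      rw [F_nonneg_iff hm hr1, cd_comm, hfr r hr]
    have h4 := h1 h2 h3 (a := t / (1 + t)) (b := 1 / (1 + t)) (by positivity) (by positivity)
      (by field_simp; ring)
    have h5 : (t / (1 + t)) • m + (1 / (1 + t)) • r = k := by
      have h6 : k = ((1 + t) / (1 + t)) • k := by rw [div_self (by positivity), one_smul]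
      rw [hrk]
      conv_rhs => rw [h6]
      module
    rw [h5] at h4
    rw [cd_comm, ← F_nonneg_iff hm hk1]
    exact h4.2
  refine hsub.antisymm fun y hy => ?_
  refine hK.complete hC.le hy.1 fun k hk => ?_
  rw [F_nonneg_iff hy.1 (hK.adm.ball k hk)]
  exact cd_le_of_mem_hb hm hy (hsub hk)

/-- Extremal sets are hyperbolic balls. -/
lemma Ext.eq_hb (hn : 0 < n) {D : ℝ} (hD : 0 < D) {K : Set (Fsp n)}
    (hK : Ext (Real.cosh D) K) :
    ∃ m : Fsp n, ‖m‖ < 1 ∧ K = hb (Real.cosh (D / 2)) m := by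
  have hC : 1 < Real.cosh D := Real.one_lt_cosh.2 hD.ne'
  have h01 : ‖(0 : Fsp n)‖ < 1 := by simp
  obtain ⟨o, ho⟩ := (hK.hull_eq hC.le).2
  have ho1 := hK.adm.ball o (interior_subset ho)
  rcases eq_or_ne o 0 with rfl | ho0
  · exact hK.eq_hb_of_zero_mem hn hD ho
  have hL := hK.image_rho ho1 h01 ho0
  have h0 : (0 : Fsp n) ∈ interior (rho o 0 '' K) := by
    rw [mem_interior_iff_mem_nhds]
    have h1 : ContinuousAt (rho o 0) (0 : Fsp n) :=
      ContinuousAt.comp (f := fun r : Fsp n => ((0 : Fsp n), r)) (x := 0)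
        (continuousAt_rho ho1 h01 ho0 h01) (by fun_prop)
    have h2 : ∀ᶠ y in 𝓝 (0 : Fsp n), rho o 0 y ∈ K := by
      apply h1.eventually
      rw [rho_right ho1 h01 ho0]
      exact mem_interior_iff_mem_nhds.1 ho
    have h3 : ∀ᶠ y in 𝓝 (0 : Fsp n), ‖y‖ < 1 :=
      continuous_norm.continuousAt.eventually (gt_mem_nhds h01)
    filter_upwards [h2, h3] with y hy1 hy2
    exact ⟨_, hy1, rho_rho ho1 h01 ho0 hy2⟩
  obtain ⟨m, hm, hmK⟩ := hL.eq_hb_of_zero_mem hn hD h0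
  refine ⟨rho o 0 m, norm_rho_lt ho1 h01 ho0 hm, ?_⟩
  rw [← image_rho_hb ho1 h01 ho0 hm, ← hmK, Set.image_image]
  ext y
  constructor
  · intro hy; exact ⟨y, hy, rho_rho ho1 h01 ho0 (hK.adm.ball y hy)⟩
  · rintro ⟨z, hz, rfl⟩
    simpa only [rho_rho ho1 h01 ho0 (hK.adm.ball z hz)] using hz

/-! ### Existence of extremal sets -/

/-- Blaschke selection together with upper semicontinuity of finite measures in the Hausdorff
distance. -/
lemma exists_max_compact {α : Type*} [MetricSpace α] [CompactSpace α] [MeasurableSpace α]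
    [BorelSpace α] (ν : Measure α) [IsFiniteMeasure ν] {G : α × α → ℝ} (hG : Continuous G) (a : α)
    (ha : 0 ≤ G (a, a)) :
    ∃ S : Set α, IsCompact S ∧ (∀ x ∈ S, ∀ y ∈ S, 0 ≤ G (x, y)) ∧
      ∀ S' : Set α, IsCompact S' → S'.Nonempty → (∀ x ∈ S', ∀ y ∈ S', 0 ≤ G (x, y)) →
        ν S' ≤ ν S := by
  let T : Set (TopologicalSpace.NonemptyCompacts α) :=
    {S | ∀ x ∈ S, ∀ y ∈ S, 0 ≤ G (x, y)}
  have hTc : IsClosed T := by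
    rw [← closure_subset_iff_isClosed]
    intro S hS x hx y hy
    by_contra! hneg
    have h1 : ∀ᶠ z in 𝓝 (x, y), G z < 0 := hG.continuousAt.eventually (gt_mem_nhds hneg)
    obtain ⟨ε, hε, h2⟩ := Metric.eventually_nhds_iff_ball.1 h1
    obtain ⟨S', hS', hd⟩ := Metric.mem_closure_iff.1 hS ε hε
    rw [Metric.NonemptyCompacts.dist_eq] at hd
    have hfin : Metric.hausdorffEDist (S : Set α) S' ≠ ⊤ :=
      Metric.hausdorffEDist_ne_top_of_nonempty_of_bounded S.nonempty S'.nonempty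
        S.isCompact.isBounded S'.isCompact.isBounded
    obtain ⟨x', hx', hxd⟩ := Metric.exists_dist_lt_of_hausdorffDist_lt hx hd hfin
    obtain ⟨y', hy', hyd⟩ := Metric.exists_dist_lt_of_hausdorffDist_lt hy hd hfin
    have h3 : ((x', y') : α × α) ∈ Metric.ball (x, y) ε := by
      rw [Metric.mem_ball, Prod.dist_eq, dist_comm x' x, dist_comm y' y]
      exact max_lt hxd hyd
    exact absurd (hS' x' hx' y' hy') (not_le.2 (h2 _ h3))
  have husc : UpperSemicontinuousOn
      (fun S : TopologicalSpace.NonemptyCompacts α => ν (S : Set α)) T := by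
    intro S _ y hy
    refine Filter.Eventually.filter_mono nhdsWithin_le_nhds ?_
    have h1 := tendsto_measure_cthickening_of_isCompact (μ := ν) S.isCompact
    have h2 : ∀ᶠ r : ℝ in 𝓝[>] 0, ν (Metric.cthickening r (S : Set α)) < y :=
      (h1.eventually (gt_mem_nhds hy)).filter_mono nhdsWithin_le_nhds
    obtain ⟨r, hr, hr0⟩ := (h2.and self_mem_nhdsWithin).exists
    filter_upwards [Metric.ball_mem_nhds S hr0] with S' hS'
    rw [Metric.mem_ball, Metric.NonemptyCompacts.dist_eq] at hS'
    refine (measure_mono fun x hx => ?_).trans_lt hr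
    have hfin : Metric.hausdorffEDist (S' : Set α) S ≠ ⊤ :=
      Metric.hausdorffEDist_ne_top_of_nonempty_of_bounded S'.nonempty S.nonempty
        S'.isCompact.isBounded S.isCompact.isBounded
    obtain ⟨z, hz, hxz⟩ := Metric.exists_dist_lt_of_hausdorffDist_lt hx hS' hfin
    exact Metric.mem_cthickening_of_dist_le x z r _ hz hxz.le
  have hne : T.Nonempty := by
    refine ⟨{a}, ?_⟩
    intro x hx y hy
    rw [TopologicalSpace.NonemptyCompacts.mem_singleton] at hx hy
    rw [hx, hy]; exact ha
  obtain ⟨S, hS, hmax⟩ := husc.exists_isMaxOn hne hTc.isCompact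
  refine ⟨S, S.isCompact, hS, fun S' hc hn h => ?_⟩
  exact hmax (show (⟨⟨S', hc⟩, hn⟩ : TopologicalSpace.NonemptyCompacts α) ∈ T from h)

lemma hb_zero_eq {D : ℝ} (hD : 0 < D) :
    hb (Real.cosh (D / 2)) (0 : Fsp n) = {x | ‖x‖ ≤ Real.tanh (D / 2)} := by
  have hc := Real.cosh_pos (D / 2)
  have hs : 0 < Real.sinh (D / 2) := Real.sinh_pos_iff.2 (by linarith)
  have hcs := Real.cosh_sq (D / 2)
  ext y
  have hlt : ‖y‖ ≤ Real.tanh (D / 2) → ‖y‖ < 1 := fun h => h.trans_lt (Real.tanh_lt_one _)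
  have key : ‖y‖ < 1 → (cd y 0 ≤ Real.cosh (D / 2) ↔ ‖y‖ ≤ Real.tanh (D / 2)) := by
    intro hy
    have hl := lam_pos hy
    rw [cd_zero_right, inv_le_iff_one_le_mul₀ hl, Real.tanh_eq_sinh_div_cosh, le_div_iff₀ hc,
      ← sq_le_sq₀ (a := (1 : ℝ)) (by positivity) (by positivity),
      ← sq_le_sq₀ (a := ‖y‖ * _) (by positivity) (by positivity), mul_pow, mul_pow, lam_sq hy.le]
    constructor <;> intro h <;> nlinarith
  constructor
  · rintro ⟨h1, h2⟩; exact (key h1).1 h2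
  · intro h; exact ⟨hlt h, (key (hlt h)).2 h⟩

lemma adm_hb_zero {D : ℝ} (hD : 0 < D) :
    Adm (Real.cosh D) (hb (Real.cosh (D / 2)) (0 : Fsp n)) := by
  refine ⟨?_, fun x hx => hx.1, fun x hx y hy => ?_⟩
  · rw [hb_zero_eq hD]
    have h : {x : Fsp n | ‖x‖ ≤ Real.tanh (D / 2)} = Metric.closedBall 0 (Real.tanh (D / 2)) :=
      Set.ext fun x => mem_closedBall_zero_iff.symm
    rw [h]
    exact isCompact_closedBall _ _
  · rw [F_nonneg_iff hx.1 hy.1]; exact cd_le_of_mem_hb_zero hx hy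

lemma hypVol_hb_zero_pos {D : ℝ} (hD : 0 < D) :
    0 < hypVol n (hb (Real.cosh (D / 2)) (0 : Fsp n)) := by
  have hA := adm_hb_zero (n := n) hD
  refine lt_of_lt_of_le ?_ (volume_le_hypVol hA.compact.measurableSet hA.ball)
  rw [hb_zero_eq hD]
  have ht : 0 < Real.tanh (D / 2) := by
    rw [Real.tanh_eq_sinh_div_cosh]
    exact div_pos (Real.sinh_pos_iff.2 (by linarith)) (Real.cosh_pos _)
  refine (Metric.measure_ball_pos volume (0 : Fsp n) ht).trans_le (measure_mono fun x hx => ?_)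
  exact (mem_ball_zero_iff.1 hx).le

/-- Within a compact subset of the unit ball there is an admissible set of largest volume. -/
lemma exists_max_adm {C : ℝ} (hC : 1 ≤ C) {B : Set (Fsp n)} (hBc : IsCompact B)
    (hB : ∀ x ∈ B, ‖x‖ < 1) {a : Fsp n} (ha : a ∈ B) :
    ∃ K, Adm C K ∧ ∀ L, Adm C L → L.Nonempty → L ⊆ B → hypVol n L ≤ hypVol n K := by
  have hBm := hBc.measurableSet
  have : CompactSpace B := isCompact_iff_compactSpace.1 hBc
  let ν : Measure B := (hypVol n).comap (↑)
  have hν : ∀ S : Set B, ν S = hypVol n ((↑) '' S) := fun S => comap_subtype_coe_apply hBm _ S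
  have : IsFiniteMeasure ν := ⟨by
    rw [hν, Set.image_univ, Subtype.range_coe]
    exact hypVol_lt_top hBc hB⟩
  have hG : Continuous fun z : B × B => F C (z.1 : Fsp n) (z.2 : Fsp n) := by
    have := continuous_lam (n := n)
    unfold F
    fun_prop
  obtain ⟨S, hSc, hS, hmax⟩ := exists_max_compact ν hG ⟨a, ha⟩ (F_self_nonneg hC (hB a ha))
  refine ⟨(↑) '' S, ⟨hSc.image continuous_subtype_val, ?_, ?_⟩, fun L hL hne hLB => ?_⟩
  · rintro _ ⟨x, -, rfl⟩; exact hB x x.2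
  · rintro _ ⟨x, hx, rfl⟩ _ ⟨y, hy, rfl⟩; exact hS x hx y hy
  · have himg : Subtype.val '' (Subtype.val ⁻¹' L : Set B) = L := by
      rw [Subtype.image_preimage_coe, Set.inter_eq_right]; exact hLB
    obtain ⟨y, hy⟩ := hne
    have h1 := hmax (Subtype.val ⁻¹' L)
      (hL.compact.isClosed.preimage continuous_subtype_val).isCompact
      ⟨⟨y, hLB hy⟩, hy⟩ (fun x hx y hy => hL.diam x hx y hy)
    rwa [hν, hν, himg] at h1

/-- Extremal sets exist, since after a reflection every nonempty admissible set contains the origin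
and hence lies in a fixed compact subset of the unit ball. -/
lemma exists_ext {D : ℝ} (hD : 0 < D) : ∃ K : Set (Fsp n), Ext (Real.cosh D) K := by
  have h01 : ‖(0 : Fsp n)‖ < 1 := by simp
  have hC1 : 1 ≤ Real.cosh D := Real.one_le_cosh D
  have hBball : ∀ y ∈ {y ∈ Metric.ball (0 : Fsp n) 1 | 0 ≤ F (Real.cosh D) 0 y}, ‖y‖ < 1 :=
    fun y hy => mem_ball_zero_iff.1 hy.1
  obtain ⟨K, hK, hmax⟩ := exists_max_adm hC1
    ((isCompact_closedBall (0 : Fsp n) 1).of_isClosed_subset (isClosed_hypBall (Real.cosh D) h01)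
      fun y hy => mem_closedBall_zero_iff.2 (hBball y hy).le) hBball
    ⟨mem_ball_zero_iff.2 h01, F_self_nonneg hC1 h01⟩
  have hmax0 : ∀ L : Set (Fsp n), Adm (Real.cosh D) L → 0 ∈ L → hypVol n L ≤ hypVol n K :=
    fun L hL h0 => hmax L hL ⟨0, h0⟩ fun y hy =>
      ⟨mem_ball_zero_iff.2 (hL.ball y hy), hL.diam 0 h0 y hy⟩
  have hmax1 : ∀ L : Set (Fsp n), Adm (Real.cosh D) L → hypVol n L ≤ hypVol n K := by
    intro L hL
    rcases L.eq_empty_or_nonempty with rfl | ⟨x, hx⟩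
    · simp
    rcases eq_or_ne x 0 with rfl | hx0
    · exact hmax0 L hL hx
    have hx1 := hL.ball x hx
    rw [← hypVol_image_rho hx1 h01 hx0 hL.compact.measurableSet hL.ball]
    exact hmax0 _ (hL.image_rho hx1 h01 hx0) ⟨x, hx, rho_left hx1 h01 hx0⟩
  exact ⟨K, hK, (hypVol_hb_zero_pos hD).trans_le (hmax1 _ (adm_hb_zero hD)), hmax1⟩

/-- The ball of radius `D / 2` is extremal. -/
lemma ext_hb_zero (hn : 0 < n) {D : ℝ} (hD : 0 < D) :
    Ext (Real.cosh D) (hb (Real.cosh (D / 2)) (0 : Fsp n)) := by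
  have h01 : ‖(0 : Fsp n)‖ < 1 := by simp
  obtain ⟨K, hK⟩ := exists_ext (n := n) hD
  obtain ⟨m, hm, rfl⟩ := hK.eq_hb hn hD
  rcases eq_or_ne m 0 with rfl | hm0
  · exact hK
  have h := hK.image_rho hm h01 hm0
  rwa [image_rho_hb hm h01 hm0 hm, rho_left hm h01 hm0] at h

lemma adm_closure {C : ℝ} {X : Set (Fsp n)} (hne : X.Nonempty) (hX : ∀ x ∈ X, ‖x‖ < 1)
    (h : ∀ x ∈ X, ∀ y ∈ X, 0 ≤ F C x y) : Adm C (closure X) := by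
  have h1 : ∀ x ∈ X, closure X ⊆ {y ∈ Metric.ball (0 : Fsp n) 1 | 0 ≤ F C x y} := fun x hx =>
    closure_minimal (fun y hy => ⟨mem_ball_zero_iff.2 (hX y hy), h x hx y hy⟩)
      (isClosed_hypBall C (hX x hx))
  obtain ⟨x₀, hx₀⟩ := hne
  have hb1 : ∀ x ∈ closure X, ‖x‖ < 1 := fun x hx => mem_ball_zero_iff.1 (h1 x₀ hx₀ hx).1
  refine ⟨?_, hb1, fun x hx y hy => ?_⟩
  · exact (isCompact_closedBall (0 : Fsp n) 1).of_isClosed_subset isClosed_closure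
      fun y hy => mem_closedBall_zero_iff.2 (hb1 y hy).le
  · have h2 : closure X ⊆ {z | 0 ≤ F C y z} := closure_minimal
      (fun z hz => by
        change 0 ≤ F C y z
        rw [F_comm]; exact (h1 z hz hy).2)
      (isClosed_le continuous_const (continuous_F_right C y))
    rw [F_comm]; exact h2 hx

end HypIso

/-- equality case of the hyperbolic isodiametric inequality (Klein model). -/
theorem hyperbolic_isodiametric_equality (n : ℕ) (hn : 2 ≤ n) (D : ℝ) (hD : 0 < D)
    (X : Set (Fsp n)) (hX : ∀ x ∈ X, ‖x‖ < 1) (hXm : MeasurableSet X)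
    (hdiam : ∀ x ∈ X, ∀ y ∈ X, hypDist x y ≤ D)
    (hvol : hypVol n X = hypVol n {x : Fsp n | ‖x‖ ≤ Real.tanh (D / 2)}) :
    ∃ z : Fsp n, ‖z‖ < 1 ∧
      closure X = {y : Fsp n | ‖y‖ < 1 ∧ hypDist y z ≤ D / 2} := by
  have hn0 : 0 < n := by omega
  rw [← HypIso.hb_zero_eq hD] at hvol
  have hext := HypIso.ext_hb_zero hn0 hD
  have hne : X.Nonempty := by
    rcases X.eq_empty_or_nonempty with rfl | h
    · rw [measure_empty] at hvol
      exact absurd hvol hext.pos.ne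
    · exact h
  have hadm : HypIso.Adm (Real.cosh D) (closure X) :=
    HypIso.adm_closure hne hX fun x hx y hy => by
      rw [HypIso.F_nonneg_iff (hX x hx) (hX y hy),
        ← HypIso.hypDist_le_iff (hX x hx) (hX y hy) hD.le]
      exact hdiam x hx y hy
  have hK := hext.of_le hadm (hvol ▸ measure_mono subset_closure)
  obtain ⟨m, hm, hKm⟩ := hK.eq_hb hn0 hD
  refine ⟨m, hm, ?_⟩
  rw [hKm]
  ext y
  constructor
  · rintro ⟨h1, h2⟩
    exact ⟨h1, (HypIso.hypDist_le_iff h1 hm (by linarith)).2 h2⟩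
  · rintro ⟨h1, h2⟩
    exact ⟨h1, (HypIso.hypDist_le_iff h1 hm (by linarith)).1 h2⟩
end
end

section
/- Let n ≥ 2 and let C ⊆ S^n be solid. Then the strongly regular boundary points of C are dense in ∂C: for every z ∈ ∂C and every ε > 0 there exists a strongly regular boundary point y ∈ ∂C with d(y,z) < ε. -/
/-!
Pick `p` in the interior of `C` close to `z`, and let `y` be a point of `∂C` nearest to `p`, at
distance `r`. Then `r ≤ d(z,p)`, so `y` is close to `z` by the triangle inequality. The ball
`B(p,r)` lies in `C`: a point `x ∉ C` of that ball is joined to `p` by a minimizing geodesic, which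
must cross `∂C` at a point other than `x`, hence strictly closer to `p` than `r`
(`exists_frontier_gd_lt`). Choosing `p` within `π/2` of `z` keeps the ball inside an open
hemisphere, where the geodesic is the radial projection of the straight segment from `p` to `x`.
-/

open MeasureTheory

noncomputable section

/-- Euclidean space `ℝ^{n+1}`. -/
abbrev Esp (n : ℕ) : Type := EuclideanSpace ℝ (Fin (n + 1))

/-- The unit sphere `S^n ⊆ ℝ^{n+1}`, as a subtype. -/
abbrev Sph (n : ℕ) : Type := Metric.sphere (0 : Esp n) 1

/-- Geodesic distance `d(x,y) = arccos ⟨x,y⟩` on the sphere. -/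
def gd {n : ℕ} (x y : Sph n) : ℝ :=
  Real.arccos (inner (𝕜 := ℝ) (x : Esp n) (y : Esp n))

/-- Closed geodesic ball `B(z,r) = {x ∈ Sⁿ : d(x,z) ≤ r}`. -/
def sphBall {n : ℕ} (z : Sph n) (r : ℝ) : Set (Sph n) := {x | gd x z ≤ r}

/-- Geodesic diameter `diam X = sup {d(x,y) : x, y ∈ X}`. -/
def sphDiam {n : ℕ} (X : Set (Sph n)) : ℝ :=
  sSup {r | ∃ x ∈ X, ∃ y ∈ X, r = gd x y}

/-- Spherical volume: the `n`-dimensional (Hausdorff) surface measure on `S^n`. -/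
def sphVol (n : ℕ) : Measure (Sph n) := μH[(n : ℝ)]

/-- A nonempty compact set `C ⊆ S^n`, `C ≠ S^n`, is solid if it equals the closure
of its interior (in the topology of `S^n`). -/
def Solid {n : ℕ} (C : Set (Sph n)) : Prop :=
  C.Nonempty ∧ IsCompact C ∧ C ≠ Set.univ ∧ C = closure (interior C)

/-- `x` is a strongly regular boundary point of `C`: `x ∈ ∂C` and there are `r > 0`
and `z ∈ C` with `B(z,r) ⊆ C` and `d(x,z) = r`. -/
def StronglyRegular {n : ℕ} (C : Set (Sph n)) (x : Sph n) : Prop :=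
  x ∈ frontier C ∧ ∃ r > 0, ∃ z ∈ C, sphBall z r ⊆ C ∧ gd x z = r

lemma gd_eq_angle {n : ℕ} (x y : Sph n) :
    gd x y = InnerProductGeometry.angle (x : Esp n) (y : Esp n) := by
  simp [gd, InnerProductGeometry.angle]

lemma gd_comm {n : ℕ} (x y : Sph n) : gd x y = gd y x := by
  simp [gd, real_inner_comm]

lemma gd_triangle {n : ℕ} (x y z : Sph n) : gd x z ≤ gd x y + gd y z := by
  simp only [gd_eq_angle]
  exact InnerProductGeometry.angle_le_angle_add_angle _ _ _

lemma gd_self {n : ℕ} (x : Sph n) : gd x x = 0 := by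
  simp [gd]

lemma gd_pos {n : ℕ} {x y : Sph n} (h : x ≠ y) : 0 < gd x y := by
  rw [gd, Real.arccos_pos, inner_lt_one_iff_real_of_norm_eq_one (by simp) (by simp)]
  exact fun h' => h (Subtype.ext h')

lemma continuous_gd {n : ℕ} (p : Sph n) : Continuous fun x : Sph n => gd x p := by
  unfold gd
  fun_prop

/-- A minimizing geodesic shorter than `π/2` from a point of `C` to a point outside the closed
set `C` meets `∂C` strictly before its endpoint. -/
lemma exists_frontier_gd_lt {n : ℕ} {C : Set (Sph n)} (hC : IsClosed C) {p x : Sph n}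
    (hp : p ∈ C) (hx : x ∉ C) (hpx : gd x p < Real.pi / 2) :
    ∃ w ∈ frontier C, gd w p < gd x p := by
  have hne : x ≠ p := fun h => hx (h ▸ hp)
  set c : ℝ := inner ℝ (x : Esp n) (p : Esp n) with hc
  have hc0 : 0 < c := by
    rw [gd] at hpx
    exact Real.arccos_lt_pi_div_two.1 hpx
  have hc1 : c < 1 := by
    rw [hc, inner_lt_one_iff_real_of_norm_eq_one (by simp) (by simp)]
    exact fun h' => hne (Subtype.ext h')
  have hpn : inner ℝ (p : Esp n) (p : Esp n) = 1 := by simp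
  have hxn : inner ℝ (x : Esp n) (x : Esp n) = 1 := by simp
  have hpx' : inner ℝ (p : Esp n) (x : Esp n) = c := by rw [hc, real_inner_comm]
  let v : unitInterval → Esp n := fun t => (1 - (t : ℝ)) • (p : Esp n) + (t : ℝ) • (x : Esp n)
  have hv : Continuous v := by fun_prop
  have hvp : ∀ t, inner ℝ (v t) (p : Esp n) = (1 - (t : ℝ)) + t * c := by
    intro t
    simp only [v, inner_add_left, real_inner_smul_left, hpn, ← hc]
    ring
  have hvp0 : ∀ t, 0 < inner ℝ (v t) (p : Esp n) := by
    intro t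
    rw [hvp]
    nlinarith [t.2.1, t.2.2]
  have hv0 : ∀ t, v t ≠ 0 := by
    intro t h
    have := hvp0 t
    simp [h] at this
  have hvn : ∀ t, ‖v t‖ ^ 2 = (1 - (t : ℝ)) ^ 2 + 2 * (1 - t) * t * c + (t : ℝ) ^ 2 := by
    intro t
    rw [← real_inner_self_eq_norm_sq]
    simp only [v, inner_add_left, inner_add_right, real_inner_smul_left, real_inner_smul_right,
      hpn, hxn, hpx', ← hc]
    ring
  let F : unitInterval → Sph n := fun t => ⟨‖v t‖⁻¹ • v t, by
    rw [mem_sphere_zero_iff_norm, norm_smul, norm_inv, norm_norm,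
      inv_mul_cancel₀ (norm_ne_zero_iff.2 (hv0 t))]⟩
  have hF : Continuous F :=
    ((hv.norm.inv₀ fun t => norm_ne_zero_iff.2 (hv0 t)).smul hv).subtype_mk _
  have hF0 : F 0 = p := Subtype.ext (by simp [F, v])
  have hF1 : F 1 = x := Subtype.ext (by simp [F, v])
  -- `F ⁻¹' C` contains `0` but not `1`, so by connectedness it has a frontier point.
  obtain ⟨t, ht'⟩ : (frontier (F ⁻¹' C)).Nonempty := by
    refine nonempty_frontier_iff.2 ⟨⟨0, ?_⟩, (Set.ne_univ_iff_exists_notMem _).2 ⟨1, ?_⟩⟩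
    · rwa [Set.mem_preimage, hF0]
    · rwa [Set.mem_preimage, hF1]
  have ht : F t ∈ frontier C := hF.frontier_preimage_subset C ht'
  refine ⟨F t, ht, ?_⟩
  have ht1 : (t : ℝ) < 1 := by
    refine lt_of_le_of_ne t.2.2 fun h => hx ?_
    have h1 : t = 1 := Subtype.ext h
    rw [← hF1, ← h1]
    exact hC.frontier_subset ht
  have hlt : c < inner ℝ (F t : Esp n) (p : Esp n) := by
    have hpos : 0 < ‖v t‖ := norm_pos_iff.2 (hv0 t)
    change c < inner ℝ (‖v t‖⁻¹ • v t) (p : Esp n)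
    rw [real_inner_smul_left, inv_mul_eq_div, lt_div_iff₀ hpos]
    refine lt_of_pow_lt_pow_left₀ 2 (hvp0 t).le ?_
    rw [mul_pow, hvn, hvp]
    -- The difference of the two sides is `(1 - c²) * ((1 - t)² + 2 (1 - t) t c)`.
    have hc2 : 0 < 1 - c ^ 2 := by nlinarith
    have hs : 0 < 1 - (t : ℝ) := by linarith
    have ht0 : 0 ≤ (t : ℝ) := t.2.1
    have : 0 < (1 - c ^ 2) * ((1 - (t : ℝ)) ^ 2 + 2 * (1 - t) * t * c) := by positivity
    linarith
  have hle : inner ℝ (F t : Esp n) (p : Esp n) ≤ 1 :=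
    (real_inner_le_norm _ _).trans (by simp)
  exact Real.strictAntiOn_arccos ⟨by linarith, hc1.le⟩ ⟨by linarith, hle⟩ hlt

/-- strongly regular boundary points are dense in the boundary of a solid set. -/
theorem stronglyRegular_dense (n : ℕ) (hn : 2 ≤ n) (C : Set (Sph n)) (hC : Solid C)
    (z : Sph n) (hz : z ∈ frontier C) (ε : ℝ) (hε : 0 < ε) :
    ∃ y : Sph n, StronglyRegular C y ∧ gd y z < ε := by
  obtain ⟨-, hcomp, -, hcl⟩ := hC
  have hclosed : IsClosed C := hcomp.isClosed
  have hzC : z ∈ closure (interior C) := hcl ▸ hclosed.frontier_subset hz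
  -- The bound `π/2` makes `exists_frontier_gd_lt` applicable.
  have hδ : 0 < min (ε / 2) (Real.pi / 2) := lt_min (by linarith) (by positivity)
  have hopen : IsOpen {x : Sph n | gd x z < min (ε / 2) (Real.pi / 2)} :=
    isOpen_lt (continuous_gd z) continuous_const
  obtain ⟨p, hpz, hp⟩ := mem_closure_iff.1 hzC _ hopen (by simpa [gd_self] using hδ)
  obtain ⟨hpz1, hpz2⟩ := lt_min_iff.1 (show gd p z < _ from hpz)
  have hfc : IsCompact (frontier C) := isClosed_frontier.isCompact
  obtain ⟨y, hy, hmin⟩ := hfc.exists_isMinOn ⟨z, hz⟩ (continuous_gd p).continuousOn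
  have hyz : gd y p ≤ gd p z := gd_comm z p ▸ hmin hz
  have hyp : y ≠ p := fun h => hy.2 (h ▸ hp)
  refine ⟨y, ⟨hy, gd y p, gd_pos hyp, p, interior_subset hp, ?_, rfl⟩, ?_⟩
  · intro x hx
    have hx : gd x p ≤ gd y p := hx
    by_contra hxC
    obtain ⟨w, hw, hwx⟩ := exists_frontier_gd_lt hclosed (interior_subset hp) hxC (by linarith)
    have : gd y p ≤ gd w p := hmin hw
    linarith
  · linarith [gd_triangle y p z]
end
end

section
/- Let n ≥ 2 and 0 < D < π. Then there exists a D-maximal set; that is, there is a compact set C ⊆ S^n with diam C ≤ D such that σ(C) = sup{σ(X) : X ⊆ S^n compact, diam X ≤ D} (in particular this supremum is attained). -/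
/-! The compact subsets of `S^n`, with the Vietoris topology, form a compact space. In it the sets of
geodesic diameter at most `D` form a closed subfamily (`isClosed_diam_le`), because `X ↦ X ×ˢ X` is
continuous and the condition says that `X ×ˢ X` lies in the closed set `{(x, y) | d(x, y) ≤ D}`.
The volume is an upper semicontinuous function of the compact set
(`upperSemicontinuous_measure_compacts`): by outer regularity, a compact set `K` with `σ(K) < b` has
an open neighbourhood of volume less than `b`, which contains every compact set close to `K`. An
upper semicontinuous function on a nonempty compact space attains its maximum.

Outer regularity requires the `n`-dimensional Hausdorff measure on `S^n` to be finite. This holds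
locally since the inverse of stereographic projection is locally Lipschitz and its domain is a
normed space of dimension `n`, on which that Hausdorff measure is a Haar measure. -/

open MeasureTheory

noncomputable section

/-- A set `C ⊆ S^n` is `D`-maximal: compact, of geodesic diameter at most `D`, and of
maximal spherical volume among compact sets of diameter at most `D`. -/
def DMaximal (n : ℕ) (D : ℝ) (C : Set (Sph n)) : Prop :=
  IsCompact C ∧ sphDiam C ≤ D ∧
    sphVol n C =
      sSup {v | ∃ X : Set (Sph n), IsCompact X ∧ sphDiam X ≤ D ∧ v = sphVol n X}

open TopologicalSpace

/-- The inverse stereographic projection from the antipode of `x` maps a small neighbourhood of the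
origin in the `n`-dimensional space `(ℝ ∙ (-x))ᗮ` onto a neighbourhood of `x`, and it is Lipschitz
there. -/
lemma sphVol_finiteAt_nhds (n : ℕ) (x : Sph n) : (sphVol n).FiniteAtFilter (nhds x) := by
  have : Fact (Module.finrank ℝ (Esp n) = n + 1) := ⟨by simp⟩
  have hv : ‖((-x : Sph n) : Esp n)‖ = 1 := norm_eq_of_mem_sphere (-x)
  have hv0 : ((-x : Sph n) : Esp n) ≠ 0 := by
    intro h
    rw [h, norm_zero] at hv
    exact zero_ne_one hv
  have hfin : Module.finrank ℝ (Submodule.span ℝ {((-x : Sph n) : Esp n)})ᗮ = n :=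
    Submodule.finrank_orthogonal_span_singleton hv0
  have hemb := isOpenEmbedding_stereographic_symm hv
  have hx0 : (stereographic hv).symm 0 = x := by
    have hs : stereographic hv x = 0 := stereographic_neg_apply x
    rw [← hs]
    refine (stereographic hv).left_inv ?_
    rw [stereographic_source, Set.mem_compl_singleton_iff]
    exact ne_neg_of_mem_unit_sphere ℝ x
  obtain ⟨K, t, ht, hK⟩ : ∃ K, ∃ t ∈ nhds 0, LipschitzOnWith K (stereographic hv).symm t := by
    have hc : ContDiff ℝ 1 (fun w : (Submodule.span ℝ {((-x : Sph n) : Esp n)})ᗮ =>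
        stereoInvFunAux ((-x : Sph n) : Esp n) (w : Esp n)) :=
      contDiff_stereoInvFunAux.comp
        (Submodule.span ℝ {((-x : Sph n) : Esp n)})ᗮ.subtypeL.contDiff
    obtain ⟨K, t, ht, hK⟩ := (hc.contDiffAt (x := 0)).exists_lipschitzOnWith
    exact ⟨K, t, ht, fun a ha b hb => hK ha hb⟩
  obtain ⟨u, hu, hμu⟩ : ∃ u ∈ nhds (0 : (Submodule.span ℝ {((-x : Sph n) : Esp n)})ᗮ),
      μH[(n : ℝ)] u < ⊤ := by
    have h := (μH[(Module.finrank ℝ (Submodule.span ℝ {((-x : Sph n) : Esp n)})ᗮ : ℝ)] :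
      Measure (Submodule.span ℝ {((-x : Sph n) : Esp n)})ᗮ).finiteAt_nhds 0
    rwa [hfin] at h
  refine ⟨(stereographic hv).symm '' (t ∩ u), ?_, ?_⟩
  · have h := hemb.isOpenMap.image_mem_nhds (Filter.inter_mem ht hu)
    rwa [hx0] at h
  · refine ((hK.mono Set.inter_subset_left).hausdorffMeasure_image_le n.cast_nonneg).trans_lt ?_
    rw [ENNReal.rpow_natCast]
    exact ENNReal.mul_lt_top (ENNReal.pow_lt_top ENNReal.coe_lt_top)
      ((measure_mono Set.inter_subset_right).trans_lt hμu)

lemma isFiniteMeasure_sphVol (n : ℕ) : IsFiniteMeasure (sphVol n) :=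
  ⟨isCompact_univ.measure_lt_top_of_nhdsWithin fun x _ =>
    (sphVol_finiteAt_nhds n x).filter_mono nhdsWithin_le_nhds⟩

/-- The values of `gd` lie in `[0, π]`, so the real supremum in `sphDiam` is a genuine one, apart
from the junk value `0` for the empty set; for `0 ≤ D` the pointwise description covers both. -/
lemma sphDiam_le_iff {n : ℕ} {D : ℝ} (hD : 0 ≤ D) (X : Set (Sph n)) :
    sphDiam X ≤ D ↔ ∀ x ∈ X, ∀ y ∈ X, gd x y ≤ D := by
  constructor
  · intro h x hx y hy
    refine le_trans (le_csSup (s := {r | ∃ x ∈ X, ∃ y ∈ X, r = gd x y}) ⟨Real.pi, ?_⟩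
      ⟨x, hx, y, hy, rfl⟩) h
    rintro r ⟨a, -, b, -, rfl⟩
    exact Real.arccos_le_pi _
  · intro h
    refine Real.sSup_le ?_ hD
    rintro r ⟨x, hx, y, hy, rfl⟩
    exact h x hx y hy

lemma isClosed_compacts_pairwise_mem {α : Type*} [TopologicalSpace α] {F : Set (α × α)}
    (hF : IsClosed F) : IsClosed {K : Compacts α | ∀ x ∈ K, ∀ y ∈ K, (x, y) ∈ F} := by
  have hsq : Continuous fun K : Compacts α => K ×ˢ K :=
    Compacts.continuous_prod.comp (continuous_id.prodMk continuous_id)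
  have heq : {K : Compacts α | ∀ x ∈ K, ∀ y ∈ K, (x, y) ∈ F} =
      (fun K : Compacts α => K ×ˢ K) ⁻¹' {L : Compacts (α × α) | (L : Set (α × α)) ⊆ F} := by
    ext K
    exact ⟨fun h p hp => h p.1 hp.1 p.2 hp.2, fun h x hx y hy => h (Set.mk_mem_prod hx hy)⟩
  rw [heq]
  exact (Compacts.isClosed_subsets_of_isClosed hF).preimage hsq

lemma isClosed_diam_le (n : ℕ) {D : ℝ} (hD : 0 ≤ D) :
    IsClosed {K : Compacts (Sph n) | sphDiam (K : Set (Sph n)) ≤ D} := by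
  have hgd : Continuous fun p : Sph n × Sph n => gd p.1 p.2 := by
    unfold gd
    exact Real.continuous_arccos.comp (by fun_prop)
  have hF : IsClosed {p : Sph n × Sph n | gd p.1 p.2 ≤ D} := isClosed_le hgd continuous_const
  simp only [sphDiam_le_iff hD]
  exact isClosed_compacts_pairwise_mem hF

lemma upperSemicontinuous_measure_compacts {α : Type*} [TopologicalSpace α] [MeasurableSpace α]
    (μ : Measure α) [μ.OuterRegular] :
    UpperSemicontinuous fun K : Compacts α => μ (K : Set α) := by
  intro K b hb
  obtain ⟨U, hKU, hU, hUb⟩ := (K : Set α).exists_isOpen_lt_of_lt b hb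
  filter_upwards [(Compacts.isOpen_subsets_of_isOpen hU).mem_nhds hKU] with L hL
  exact (measure_mono hL).trans_lt hUb

/-- existence of `D`-maximal sets (the supremum of volumes is attained). -/
theorem exists_DMaximal (n : ℕ) (hn : 2 ≤ n) (D : ℝ) (hD0 : 0 < D) (hD1 : D < Real.pi) :
    ∃ C : Set (Sph n), DMaximal n D C := by
  have := isFiniteMeasure_sphVol n
  obtain ⟨C, hC, hmax⟩ := UpperSemicontinuousOn.exists_isMaxOn
    (s := {K : Compacts (Sph n) | sphDiam (K : Set (Sph n)) ≤ D})
    ⟨⊥, (sphDiam_le_iff hD0.le _).2 (by simp)⟩ (isClosed_diam_le n hD0.le).isCompact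
    ((upperSemicontinuous_measure_compacts (sphVol n)).upperSemicontinuousOn _)
  refine ⟨C, C.isCompact, hC, le_antisymm (le_sSup ⟨C, C.isCompact, hC, rfl⟩) (sSup_le ?_)⟩
  rintro v ⟨X, hX, hXD, rfl⟩
  exact hmax (show (⟨X, hX⟩ : Compacts (Sph n)) ∈ _ from hXD)
end
end

section
/- Let n ≥ 2 and let X ⊆ S^n be a nonempty set with geodesic diameter diam X < arccos(−1/(n+1)). Then X is contained in an open hemisphere: there exists z ∈ ℝ^{n+1}, z ≠ 0, such that ⟨x,z⟩ > 0 for all x ∈ X. -/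
/-!
Put `c = cos (diam X)`. Then `c > -1/(n+1)`, and `c ≤ ⟨x, y⟩` for all `x, y ∈ X`. The convex hull of
`X` then stays at distance at least `δ = (1 + (n+1) c)/(n+2) > 0` from the origin
(`le_norm_of_mem_convexHull`): by Carathéodory's theorem a point `v` of it is `∑ wⱼ xⱼ` with at most
`n + 2` points `xⱼ ∈ X` and positive weights of sum `1`; the largest weight satisfies
`wᵢ ≥ 1/(n+2)`, so `‖v‖ ≥ ⟨xᵢ, v⟩ ≥ wᵢ + c (1 - wᵢ) ≥ δ`. Hence the origin is outside the closure of
the convex hull, a hyperplane strictly separates the two, and its normal vector is the pole of the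
required open hemisphere.
-/

open MeasureTheory

noncomputable section

/-- The convex hull of unit vectors of `ℝ^{n+1}` with pairwise inner products at least `c` keeps
distance `(1 + (n+1) c)/(n+2)` from the origin. The bound is positive exactly when `c > -1/(n+1)`;
at `c = -1/(n+1)` the regular simplex has the origin as its centre. -/
lemma le_norm_of_mem_convexHull {n : ℕ} {K : Set (Esp n)} {c : ℝ} (hK1 : ∀ x ∈ K, ‖x‖ = 1)
    (hKc : ∀ x ∈ K, ∀ y ∈ K, c ≤ inner ℝ x y) {v : Esp n} (hv : v ∈ convexHull ℝ K) :
    (1 + ((n : ℝ) + 1) * c) / ((n : ℝ) + 2) ≤ ‖v‖ := by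
  obtain ⟨ι, _, p, w, hpK, hind, hwpos, hwsum, hwv⟩ := eq_pos_convex_span_of_mem_convexHull hv
  have hp : ∀ i, p i ∈ K := fun i => hpK ⟨i, rfl⟩
  have hcard : Fintype.card ι ≤ n + 2 := by
    have h1 := hind.card_le_finrank_succ
    have h2 : Module.finrank ℝ (vectorSpan ℝ (Set.range p)) ≤ Module.finrank ℝ (Esp n) :=
      Submodule.finrank_le _
    rw [finrank_euclideanSpace_fin] at h2
    omega
  have hne : Nonempty ι := by
    by_contra h
    rw [not_nonempty_iff] at h
    simp at hwsum
  obtain ⟨i, hi⟩ := Finite.exists_max w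
  have hwi : 1 ≤ ((n : ℝ) + 2) * w i := by
    have h1 : ∑ j, w j ≤ ∑ _j : ι, w i := Finset.sum_le_sum fun j _ => hi j
    rw [hwsum, Finset.sum_const, Finset.card_univ, nsmul_eq_mul] at h1
    have h2 : (Fintype.card ι : ℝ) ≤ (n : ℝ) + 2 := by exact_mod_cast hcard
    exact h1.trans (mul_le_mul_of_nonneg_right h2 (hwpos i).le)
  have hself : inner ℝ (p i) (p i) = (1 : ℝ) := by
    rw [real_inner_self_eq_norm_sq, hK1 _ (hp i)]; norm_num
  have hc1 : c ≤ 1 := hself ▸ hKc _ (hp i) _ (hp i)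
  have hpair : ∑ j, w j * (inner ℝ (p i) (p j) - c) = inner ℝ (p i) v - c := by
    have h1 : ∑ j, w j * inner ℝ (p i) (p j) = inner ℝ (p i) v := by
      simp [← hwv, inner_sum, inner_smul_right]
    simp_rw [mul_sub]
    rw [Finset.sum_sub_distrib, h1, ← Finset.sum_mul, hwsum, one_mul]
  -- All terms of the sum are nonnegative, so the `i`-th one alone is a lower bound.
  have hterm : w i * (1 - c) ≤ inner ℝ (p i) v - c := by
    rw [← hpair, ← hself]
    exact Finset.single_le_sum (f := fun j => w j * (inner ℝ (p i) (p j) - c))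
      (fun j _ => mul_nonneg (hwpos j).le (sub_nonneg.2 (hKc _ (hp i) _ (hp j))))
      (Finset.mem_univ i)
  have hcs : inner ℝ (p i) v ≤ ‖v‖ := by
    simpa [hK1 _ (hp i)] using real_inner_le_norm (p i) v
  have hn : (0 : ℝ) < (n : ℝ) + 2 := by positivity
  rw [div_le_iff₀ hn]
  have h3 := mul_le_mul_of_nonneg_right hwi (sub_nonneg.2 hc1)
  have h4 := mul_le_mul_of_nonneg_left (hterm.trans (sub_le_sub_right hcs c)) hn.le
  linarith

/-- a set of geodesic diameter less than `arccos(−1/(n+1))` is contained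
in an open hemisphere. -/
theorem small_diameter_in_open_hemisphere (n : ℕ) (hn : 2 ≤ n) (X : Set (Sph n))
    (hne : X.Nonempty) (hdiam : sphDiam X < Real.arccos (-1 / ((n : ℝ) + 1))) :
    ∃ z : Esp n, z ≠ 0 ∧ ∀ x ∈ X, 0 < inner (𝕜 := ℝ) (x : Esp n) z := by
  have hgd : ∀ x ∈ X, ∀ y ∈ X, gd x y ≤ sphDiam X := fun x hx y hy =>
    le_csSup ⟨Real.pi, by rintro _ ⟨a, _, b, _, rfl⟩; exact Real.arccos_le_pi _⟩
      ⟨x, hx, y, hy, rfl⟩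
  obtain ⟨x₀, hx₀⟩ := hne
  have hD0 : 0 ≤ sphDiam X := (Real.arccos_nonneg _).trans (hgd x₀ hx₀ x₀ hx₀)
  have hn1 : (0 : ℝ) < (n : ℝ) + 1 := by positivity
  have hc : -1 / ((n : ℝ) + 1) < Real.cos (sphDiam X) := by
    have h := Real.cos_lt_cos_of_nonneg_of_le_pi hD0 (Real.arccos_le_pi _) hdiam
    rwa [Real.cos_arccos] at h
    · rw [le_div_iff₀ hn1]; linarith [(Nat.cast_nonneg n : (0 : ℝ) ≤ n)]
    · rw [div_le_iff₀ hn1]; linarith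
  have hnorm : ∀ x : Sph n, ‖(x : Esp n)‖ = 1 := fun x => norm_eq_of_mem_sphere x
  have hinner : ∀ x ∈ X, ∀ y ∈ X, Real.cos (sphDiam X) ≤ inner ℝ (x : Esp n) (y : Esp n) := by
    intro x hx y hy
    have habs := abs_real_inner_le_norm (x : Esp n) (y : Esp n)
    rw [hnorm, hnorm, one_mul, abs_le] at habs
    rw [← Real.cos_arccos habs.1 habs.2]
    exact Real.cos_le_cos_of_nonneg_of_le_pi (Real.arccos_nonneg _)
      (hdiam.le.trans (Real.arccos_le_pi _)) (hgd x hx y hy)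
  set K : Set (Esp n) := (↑) '' X
  have hδ : 0 < (1 + ((n : ℝ) + 1) * Real.cos (sphDiam X)) / ((n : ℝ) + 2) := by
    rw [div_lt_iff₀ hn1] at hc
    exact div_pos (by linarith) (by positivity)
  have hfar : closure (convexHull ℝ K) ⊆
      {v | (1 + ((n : ℝ) + 1) * Real.cos (sphDiam X)) / ((n : ℝ) + 2) ≤ ‖v‖} :=
    closure_minimal
      (fun v hv => le_norm_of_mem_convexHull (by rintro _ ⟨x, _, rfl⟩; exact hnorm x)
        (by rintro _ ⟨x, hx, rfl⟩ _ ⟨y, hy, rfl⟩; exact hinner x hx y hy) hv)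
      (isClosed_le continuous_const continuous_norm)
  have h0 : (0 : Esp n) ∉ closure (convexHull ℝ K) := fun h => by
    have h1 := hfar h
    rw [Set.mem_ofPred_eq, norm_zero] at h1
    exact absurd h1 (not_le.2 hδ)
  obtain ⟨f, u, hu, hf⟩ := geometric_hahn_banach_point_closed (convex_convexHull ℝ K).closure
    isClosed_closure h0
  rw [map_zero] at hu
  have hpos : ∀ x ∈ X,
      0 < inner ℝ (x : Esp n) ((InnerProductSpace.toDual ℝ (Esp n)).symm f) := by
    intro x hx
    rw [real_inner_comm, InnerProductSpace.toDual_symm_apply]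
    exact hu.trans (hf _ (subset_closure (subset_convexHull ℝ K ⟨x, hx, rfl⟩)))
  refine ⟨_, fun hz => ?_, hpos⟩
  have h := hpos x₀ hx₀
  rw [hz, inner_zero_right] at h
  exact lt_irrefl _ h
end
end

section
/- Let n ≥ 2 and let X ⊆ S^n be a nonempty compact set with geodesic diameter diam X ≤ π/2. Let Y = {x/‖x‖ : x ∈ conv(X), x ≠ 0} ⊆ S^n, where conv(X) denotes the convex hull of X in ℝ^{n+1} (Y is the spherical convex hull of X). Then diam Y = diam X. -/
/-!
Put `c = cos (diam X)`, which is nonnegative because `diam X ≤ π/2`. Any two points of `X` have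
inner product at least `c`, and by bilinearity so do any two points `p`, `q` of the convex hull
(`le_inner_of_mem_convexHull`). The convex hull lies in the unit ball, so
`⟪p, q⟫ ≥ c ≥ c * ‖p‖ * ‖q‖`: normalizing `p` and `q` keeps the inner product at least `c`, and hence
the geodesic distance at most `diam X`. The reverse inequality holds because the spherical hull
contains `X`.
-/

open MeasureTheory

noncomputable section

/-- A lower bound for the inner product on `S` passes to the convex hull, one variable at a time,
because half-spaces are convex. -/
lemma le_inner_of_mem_convexHull {n : ℕ} {S : Set (Esp n)} {c : ℝ}
    (h : ∀ x ∈ S, ∀ y ∈ S, c ≤ inner ℝ x y) {p q : Esp n}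
    (hp : p ∈ convexHull ℝ S) (hq : q ∈ convexHull ℝ S) : c ≤ inner ℝ p q := by
  have half : ∀ x : Esp n, Convex ℝ {z : Esp n | c ≤ inner ℝ x z} := fun x =>
    convex_halfSpace_ge (innerₛₗ ℝ x).isLinear c
  have h1 : ∀ x ∈ S, c ≤ inner ℝ x q := fun x hx =>
    convexHull_min (fun y hy => h x hx y hy) (half x) hq
  rw [real_inner_comm]
  exact convexHull_min (fun x hx => (h1 x hx).trans_eq (real_inner_comm _ _)) (half q) hp

lemma gd_le_sphDiam {n : ℕ} {X : Set (Sph n)} {x y : Sph n} (hx : x ∈ X) (hy : y ∈ X) :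
    gd x y ≤ sphDiam X :=
  le_csSup ⟨Real.pi, by rintro r ⟨a, -, b, -, rfl⟩; exact Real.arccos_le_pi _⟩
    ⟨x, hx, y, hy, rfl⟩

/-- the spherical convex hull of a nonempty compact set of geodesic
diameter at most `π/2` has the same geodesic diameter. -/
theorem sphDiam_sphericalConvexHull (n : ℕ) (hn : 2 ≤ n) (X : Set (Sph n))
    (hne : X.Nonempty) (hcomp : IsCompact X) (hdiam : sphDiam X ≤ Real.pi / 2) :
    sphDiam {y : Sph n | ∃ x ∈ convexHull ℝ (((↑) '' X : Set (Esp n))),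
        x ≠ 0 ∧ (y : Esp n) = ‖x‖⁻¹ • x} = sphDiam X := by
  have hmem : ∀ x ∈ X, x ∈ {y : Sph n | ∃ x ∈ convexHull ℝ (((↑) '' X : Set (Esp n))),
        x ≠ 0 ∧ (y : Esp n) = ‖x‖⁻¹ • x} := fun x hx =>
    ⟨x, subset_convexHull ℝ _ ⟨x, hx, rfl⟩, ne_zero_of_mem_unit_sphere x, by simp⟩
  have hD0 : 0 ≤ sphDiam X := by
    obtain ⟨x, hx⟩ := hne
    exact (Real.arccos_nonneg _).trans (gd_le_sphDiam hx hx)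
  have hDpi : sphDiam X ≤ Real.pi := hdiam.trans (by linarith [Real.pi_pos])
  have hc0 : 0 ≤ Real.cos (sphDiam X) :=
    Real.cos_nonneg_of_neg_pi_div_two_le_of_le (by linarith [Real.pi_pos]) hdiam
  have hX : ∀ x ∈ ((↑) '' X : Set (Esp n)), ∀ y ∈ ((↑) '' X : Set (Esp n)),
      Real.cos (sphDiam X) ≤ inner ℝ x y := by
    rintro _ ⟨x, hx, rfl⟩ _ ⟨y, hy, rfl⟩
    have habs : |inner ℝ (x : Esp n) (y : Esp n)| ≤ 1 := by
      simpa using abs_real_inner_le_norm (x : Esp n) (y : Esp n)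
    rw [← Real.cos_arccos (abs_le.1 habs).1 (abs_le.1 habs).2]
    exact Real.cos_le_cos_of_nonneg_of_le_pi (Real.arccos_nonneg _) hDpi (gd_le_sphDiam hx hy)
  have hball : ∀ p ∈ convexHull ℝ ((↑) '' X : Set (Esp n)), ‖p‖ ≤ 1 := by
    intro p hp
    have hsub : ((↑) '' X : Set (Esp n)) ⊆ Metric.closedBall 0 1 := by
      rintro _ ⟨x, -, rfl⟩
      simp
    simpa using convexHull_min hsub (convex_closedBall _ _) hp
  apply le_antisymm
  · obtain ⟨x₀, hx₀⟩ := hne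
    refine csSup_le ⟨_, x₀, hmem _ hx₀, x₀, hmem _ hx₀, rfl⟩ ?_
    rintro r ⟨a, ⟨p, hp, hp0, ha⟩, b, ⟨q, hq, hq0, hb⟩, rfl⟩
    have hpq := le_inner_of_mem_convexHull hX hp hq
    have hnp := norm_pos_iff.2 hp0
    have hnq := norm_pos_iff.2 hq0
    have hprod : ‖p‖ * ‖q‖ ≤ 1 := mul_le_one₀ (hball p hp) hnq.le (hball q hq)
    have key : Real.cos (sphDiam X) ≤ inner ℝ (a : Esp n) (b : Esp n) := by
      have heq : inner ℝ (a : Esp n) (b : Esp n) = inner ℝ p q / (‖p‖ * ‖q‖) := by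
        rw [ha, hb, real_inner_smul_left, real_inner_smul_right]
        field_simp
      rw [heq, le_div_iff₀ (mul_pos hnp hnq)]
      exact (mul_le_of_le_one_right hc0 hprod).trans hpq
    calc gd a b ≤ Real.arccos (Real.cos (sphDiam X)) := Real.arccos_le_arccos key
      _ = sphDiam X := Real.arccos_cos hD0 hDpi
  · obtain ⟨x₀, hx₀⟩ := hne
    refine csSup_le ⟨_, x₀, hx₀, x₀, hx₀, rfl⟩ ?_
    rintro r ⟨a, ha, b, hb, rfl⟩
    exact gd_le_sphDiam (hmem a ha) (hmem b hb)
end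
end
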